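/- arXiv:1808.04199 — 7 statements merged into one kernel-verified Lean document; each statement's English description precedes it below -/
import Mathlib

section
/- Let π be a permutation. Then (1) π contains the pattern 231 if and only if π has a down oriented separated pair, and (2) π contains the pattern 132 if and only if π has an up oriented separated pair. -/
/-!
A separated pair together with the larger value between its two members is an occurrence of 231
or 132. Conversely, let a value `π p` lie, in position, between two smaller values `x < y`. Every
value in `[x, y]` is less than `π p`, so it sits strictly to the left or strictly to the right of
position `p`; since `x` and `y` sit on opposite sides, two consecutive values `a`, `a + 1` in
`[x, y]` do as well, on the same sides as `x` and `y` respectively (`exists_crossing`). This pair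
is separated by `π p`, with the orientation of the pair `(x, y)`.
-/

/-!  Common definitions: permutation patterns, separated pairs, rev-tier. -/

/-- `π` contains the pattern `σ`. -/
def Pattern.Contains {n k : ℕ} (π : Equiv.Perm (Fin n)) (σ : Equiv.Perm (Fin k)) : Prop :=
  ∃ α : Fin k → Fin n, StrictMono α ∧ ∀ i j : Fin k, (π (α i) < π (α j) ↔ σ i < σ j)

/-- `π` avoids the pattern `σ`. -/
def Pattern.Avoids {n k : ℕ} (π : Equiv.Perm (Fin n)) (σ : Equiv.Perm (Fin k)) : Prop :=
  ¬ Pattern.Contains π σ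

/-- The pair of values `(a, a+1)` (0-indexed) is an up oriented separated pair in `σ`:
`a` precedes `a+1` and some value `> a+1` occurs strictly between them. -/
def UpSepPair {n : ℕ} (σ : Equiv.Perm (Fin n)) (a : Fin n) : Prop :=
  ∃ hb : (a : ℕ) + 1 < n,
    σ.symm a < σ.symm ⟨(a : ℕ) + 1, hb⟩ ∧
    ∃ p : Fin n, σ.symm a < p ∧ p < σ.symm ⟨(a : ℕ) + 1, hb⟩ ∧ (a : ℕ) + 1 < (σ p : ℕ)

/-- The pair of values `(a, a+1)` (0-indexed) is a down oriented separated pair in `σ`. -/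
def DownSepPair {n : ℕ} (σ : Equiv.Perm (Fin n)) (a : Fin n) : Prop :=
  ∃ hb : (a : ℕ) + 1 < n,
    σ.symm ⟨(a : ℕ) + 1, hb⟩ < σ.symm a ∧
    ∃ p : Fin n, σ.symm ⟨(a : ℕ) + 1, hb⟩ < p ∧ p < σ.symm a ∧ (a : ℕ) + 1 < (σ p : ℕ)

/-- `(a, a+1)` is a separated pair (of either orientation). -/
def SepPair {n : ℕ} (σ : Equiv.Perm (Fin n)) (a : Fin n) : Prop :=
  UpSepPair σ a ∨ DownSepPair σ a

/-- `σ` has no separated pairs. -/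
def NoSepPairs {n : ℕ} (σ : Equiv.Perm (Fin n)) : Prop :=
  ∀ a : Fin n, ¬ SepPair σ a

/-- `f` lists the lower values of an increasing sequence of separated pairs in `σ` with
alternating orientations; the first pair is down oriented iff `firstDown = true`. -/
def AltChain {n : ℕ} (σ : Equiv.Perm (Fin n)) (firstDown : Bool) {t : ℕ}
    (f : Fin t → Fin n) : Prop :=
  StrictMono f ∧ ∀ j : Fin t,
    if ((j : ℕ) % 2 = 0) ↔ (firstDown = true) then DownSepPair σ (f j)
    else UpSepPair σ (f j)

/-- The rev-tier of `σ`: the maximal length of an increasing sequence of separated pairs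
with alternating orientations beginning with a down oriented pair. -/
noncomputable def revTier {n : ℕ} (σ : Equiv.Perm (Fin n)) : ℕ :=
  sSup {t : ℕ | ∃ f : Fin t → Fin n, AltChain σ true f}

/-- Maximal length of an increasing alternating sequence of separated pairs (either
starting orientation). -/
noncomputable def maxAltLen {n : ℕ} (σ : Equiv.Perm (Fin n)) : ℕ :=
  sSup {t : ℕ | ∃ b : Bool, ∃ f : Fin t → Fin n, AltChain σ b f}

/-- `σ` has a separated pair and every maximum-length increasing alternating sequence of
separated pairs begins with an up oriented pair. -/
def UpOriented {n : ℕ} (σ : Equiv.Perm (Fin n)) : Prop :=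
  1 ≤ maxAltLen σ ∧ ¬ ∃ f : Fin (maxAltLen σ) → Fin n, AltChain σ true f

/-- `σ` has a separated pair and every maximum-length increasing alternating sequence of
separated pairs begins with a down oriented pair. -/
def DownOriented {n : ℕ} (σ : Equiv.Perm (Fin n)) : Prop :=
  1 ≤ maxAltLen σ ∧ ¬ ∃ f : Fin (maxAltLen σ) → Fin n, AltChain σ false f

/-- `σ` is a basis element of the class of permutations of rev-tier at most `t`. -/
def IsBasisElt (t : ℕ) {n : ℕ} (σ : Equiv.Perm (Fin n)) : Prop :=
  t + 1 ≤ revTier σ ∧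
  ∀ (m : ℕ) (τ : Equiv.Perm (Fin m)), m < n → Pattern.Contains σ τ → revTier τ ≤ t

/-- The entry `1` of `σ` is in (1-indexed) position `k`. -/
def onePos {n : ℕ} (σ : Equiv.Perm (Fin n)) (k : ℕ) : Prop :=
  ∀ h : 0 < n, (σ.symm ⟨0, h⟩ : ℕ) + 1 = k

/-- `η(n,k)`: number of permutations of length `n` with no separated pairs and entry `1`
in position `k`. -/
noncomputable def eta (n k : ℕ) : ℕ :=
  Nat.card {σ : Equiv.Perm (Fin n) // NoSepPairs σ ∧ onePos σ k}

/-- `η(n)`: number of permutations of length `n` with no separated pairs. -/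
noncomputable def etaTot (n : ℕ) : ℕ :=
  Nat.card {σ : Equiv.Perm (Fin n) // NoSepPairs σ}

/-- `μ_U(n,t,k)`: number of up-oriented permutations of length `n`, rev-tier `t`, with
entry `1` in position `k`. -/
noncomputable def muU (n t k : ℕ) : ℕ :=
  Nat.card {σ : Equiv.Perm (Fin n) // UpOriented σ ∧ revTier σ = t ∧ onePos σ k}

/-- `μ_D(n,t,k)`: number of down-oriented permutations of length `n`, rev-tier `t`, with
entry `1` in position `k`. -/
noncomputable def muD (n t k : ℕ) : ℕ :=
  Nat.card {σ : Equiv.Perm (Fin n) // DownOriented σ ∧ revTier σ = t ∧ onePos σ k}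

/-- `π` is a down-up alternating permutation: `π₁ > π₂ < π₃ > ⋯`. -/
def DownUp {n : ℕ} (π : Equiv.Perm (Fin n)) : Prop :=
  ∀ (i : ℕ) (h : i + 1 < n),
    if i % 2 = 0 then π ⟨i + 1, h⟩ < π ⟨i, by omega⟩
    else π ⟨i, by omega⟩ < π ⟨i + 1, h⟩

/-- The Entringer number `E_{n,k}`: down-up alternating permutations of length `n` whose
first entry is `k` (1-indexed value). -/
noncomputable def entringer (n k : ℕ) : ℕ :=
  Nat.card {π : Equiv.Perm (Fin n) // DownUp π ∧ ∀ h : 0 < n, (π ⟨0, h⟩ : ℕ) + 1 = k}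

/-- The reversal of a permutation: `(revP σ) j = σ (n + 1 - j)`. -/
def revP {n : ℕ} (σ : Equiv.Perm (Fin n)) : Equiv.Perm (Fin n) :=
  (Fin.revPerm).trans σ

/-- The explicit maximal rev-tier permutation of length `n` (0-indexed values):
the even entries of `{1,…,n}` in decreasing order, then `n`, then the odd entries in
increasing order. -/
def maxPermVal (n : ℕ) (i : Fin n) : Fin n :=
  if h1 : (i : ℕ) < (n - 1) / 2 then
    ⟨2 * ((n - 1) / 2) - 2 * (i : ℕ) - 1, by omega⟩
  else if h2 : (i : ℕ) = (n - 1) / 2 then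
    ⟨n - 1, by have := i.isLt; omega⟩
  else
    ⟨2 * ((i : ℕ) - (n - 1) / 2 - 1), by have := i.isLt; omega⟩

def p231 : Equiv.Perm (Fin 3) :=
  ⟨![1, 2, 0], ![2, 0, 1], by decide, by decide⟩

def p132 : Equiv.Perm (Fin 3) :=
  ⟨![0, 2, 1], ![0, 2, 1], by decide, by decide⟩

def p2413 : Equiv.Perm (Fin 4) :=
  ⟨![1, 3, 0, 2], ![2, 0, 3, 1], by decide, by decide⟩

def p2431 : Equiv.Perm (Fin 4) :=
  ⟨![1, 3, 2, 0], ![3, 0, 2, 1], by decide, by decide⟩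

def p23154 : Equiv.Perm (Fin 5) :=
  ⟨![1, 2, 0, 4, 3], ![2, 0, 1, 4, 3], by decide, by decide⟩

def p24153 : Equiv.Perm (Fin 5) :=
  ⟨![1, 3, 0, 4, 2], ![2, 0, 4, 1, 3], by decide, by decide⟩

def p24513 : Equiv.Perm (Fin 5) :=
  ⟨![1, 3, 4, 0, 2], ![3, 0, 4, 1, 2], by decide, by decide⟩

def p24531 : Equiv.Perm (Fin 5) :=
  ⟨![1, 3, 4, 2, 0], ![4, 0, 3, 1, 2], by decide, by decide⟩

def p42513 : Equiv.Perm (Fin 5) :=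
  ⟨![3, 1, 4, 0, 2], ![3, 1, 4, 0, 2], by decide, by decide⟩

def p42531 : Equiv.Perm (Fin 5) :=
  ⟨![3, 1, 4, 2, 0], ![4, 1, 3, 0, 2], by decide, by decide⟩

def p231564 : Equiv.Perm (Fin 6) :=
  ⟨![1, 2, 0, 4, 5, 3], ![2, 0, 1, 5, 3, 4], by decide, by decide⟩

def p261453 : Equiv.Perm (Fin 6) :=
  ⟨![1, 5, 0, 3, 4, 2], ![2, 0, 5, 3, 4, 1], by decide, by decide⟩

def p523164 : Equiv.Perm (Fin 6) :=
  ⟨![4, 1, 2, 0, 5, 3], ![3, 1, 2, 5, 0, 4], by decide, by decide⟩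

def p562413 : Equiv.Perm (Fin 6) :=
  ⟨![4, 5, 1, 3, 0, 2], ![4, 2, 5, 3, 0, 1], by decide, by decide⟩

def p562431 : Equiv.Perm (Fin 6) :=
  ⟨![4, 5, 1, 3, 2, 0], ![5, 2, 4, 3, 0, 1], by decide, by decide⟩

def p6723154 : Equiv.Perm (Fin 7) :=
  ⟨![5, 6, 1, 2, 0, 4, 3], ![4, 2, 3, 6, 5, 0, 1], by decide, by decide⟩

def p4321 : Equiv.Perm (Fin 4) :=
  ⟨![3, 2, 1, 0], ![3, 2, 1, 0], by decide, by decide⟩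

def p4213 : Equiv.Perm (Fin 4) :=
  ⟨![3, 1, 0, 2], ![2, 1, 3, 0], by decide, by decide⟩

/-- A discrete intermediate value principle: a predicate that holds at `x` and fails at `y > x`
changes from true to false at some consecutive pair of values within `[x, y]`. -/
theorem exists_crossing {n : ℕ} (P : Fin n → Prop) (x y : Fin n) (hxy : x < y) (hx : P x)
    (hy : ¬ P y) : ∃ (a : Fin n) (hb : (a : ℕ) + 1 < n),
      P a ∧ ¬ P ⟨(a : ℕ) + 1, hb⟩ ∧ (a : ℕ) + 1 ≤ (y : ℕ) := by
  by_contra! hcon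
  have key : ∀ (k : ℕ) (hk : k < n), (x : ℕ) ≤ k → k ≤ (y : ℕ) → P ⟨k, hk⟩ := by
    intro k hk hxk
    induction k, hxk using Nat.le_induction with
    | base => exact fun _ => hx
    | succ k _ ih =>
      intro hky
      by_contra hnot
      exact absurd hky (not_le.mpr (hcon ⟨k, by omega⟩ hk (ih (by omega) (by omega)) hnot))
  exact hy (key y y.isLt hxy.le le_rfl)

theorem contains_p231_iff {n : ℕ} (π : Equiv.Perm (Fin n)) :
    Pattern.Contains π p231 ↔
      ∃ i p k : Fin n, i < p ∧ p < k ∧ π k < π i ∧ π i < π p := by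
  constructor
  · rintro ⟨α, hα, h⟩
    exact ⟨α 0, α 1, α 2, hα (by decide), hα (by decide), (h 2 0).2 (by decide),
      (h 0 1).2 (by decide)⟩
  · rintro ⟨i, p, k, hip, hpk, hki, hip'⟩
    refine ⟨![i, p, k], ?_, ?_⟩
    · intro a b hab
      fin_cases a <;> fin_cases b <;> simp_all <;> order
    · intro a b
      fin_cases a <;> fin_cases b <;> simp [p231] <;> order

theorem contains_p132_iff {n : ℕ} (π : Equiv.Perm (Fin n)) :
    Pattern.Contains π p132 ↔
      ∃ i p k : Fin n, i < p ∧ p < k ∧ π i < π k ∧ π k < π p := by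
  constructor
  · rintro ⟨α, hα, h⟩
    exact ⟨α 0, α 1, α 2, hα (by decide), hα (by decide), (h 0 2).2 (by decide),
      (h 2 1).2 (by decide)⟩
  · rintro ⟨i, p, k, hip, hpk, hik, hkp⟩
    refine ⟨![i, p, k], ?_, ?_⟩
    · intro a b hab
      fin_cases a <;> fin_cases b <;> simp_all <;> order
    · intro a b
      fin_cases a <;> fin_cases b <;> simp [p132] <;> order

theorem symm_ne_of_lt {n : ℕ} (π : Equiv.Perm (Fin n)) {v p : Fin n} (h : v < π p) :
    π.symm v ≠ p := by
  rintro rfl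
  simp at h

/-- `π` contains 231 iff it has a down oriented separated pair, and
contains 132 iff it has an up oriented separated pair. -/
theorem contains_iff_sep_pair {n : ℕ} (π : Equiv.Perm (Fin n)) :
    (Pattern.Contains π p231 ↔ ∃ a : Fin n, DownSepPair π a) ∧
    (Pattern.Contains π p132 ↔ ∃ a : Fin n, UpSepPair π a) := by
  rw [contains_p231_iff, contains_p132_iff]
  refine ⟨⟨?_, ?_⟩, ⟨?_, ?_⟩⟩
  · rintro ⟨i, p, k, hip, hpk, hki, hip'⟩
    obtain ⟨a, hb, ha, ha', hle⟩ := exists_crossing (fun v => p < π.symm v) (π k) (π i) hki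
      (by simpa using hpk) (by simpa using hip.le)
    have hlt : (⟨(a : ℕ) + 1, hb⟩ : Fin n) < π p := lt_of_le_of_lt hle hip'
    have hpos := lt_of_le_of_ne (not_lt.mp ha') (symm_ne_of_lt π hlt)
    exact ⟨a, hb, hpos.trans ha, p, hpos, ha, hlt⟩
  · rintro ⟨a, hb, -, p, h1, h2, h3⟩
    refine ⟨_, p, _, h1, h2, ?_, ?_⟩
    · simp [Fin.lt_def]
    · simpa [Fin.lt_def] using h3
  · rintro ⟨i, p, k, hip, hpk, hik, hkp⟩
    obtain ⟨a, hb, ha, ha', hle⟩ := exists_crossing (fun v => π.symm v < p) (π i) (π k) hik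
      (by simpa using hip) (by simpa using hpk.le)
    have hlt : (⟨(a : ℕ) + 1, hb⟩ : Fin n) < π p := lt_of_le_of_lt hle hkp
    have hpos := lt_of_le_of_ne (not_lt.mp ha') (symm_ne_of_lt π hlt).symm
    exact ⟨a, hb, ha.trans hpos, p, ha, hpos, hlt⟩
  · rintro ⟨a, hb, -, p, h1, h2, h3⟩
    refine ⟨_, p, _, h1, h2, ?_, ?_⟩
    · simp [Fin.lt_def]
    · simpa [Fin.lt_def] using h3
end

section
/- If σ and τ are permutations and σ is contained in τ, then t_rev(σ) ≤ t_rev(τ). Consequently, for every t ≥ 0 the set of permutations with rev-tier at most t is closed downward under pattern containment, i.e., it is a permutation class. -/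
/-- A property that holds at `A` and fails at `B` switches at some step `c → c + 1` in between. -/
lemma exists_crossing_s1 (P : ℕ → Prop) {A B : ℕ} (hAB : A ≤ B) (hA : P A) (hB : ¬ P B) :
    ∃ c, A ≤ c ∧ c < B ∧ P c ∧ ¬ P (c + 1) := by
  induction B, hAB using Nat.le_induction with
  | base => exact absurd hA hB
  | succ B h ih =>
    by_cases hP : P B
    · exact ⟨B, h, Nat.lt_succ_self B, hP, hB⟩
    · obtain ⟨c, h1, h2, h3⟩ := ih hP
      exact ⟨c, h1, h2.trans (Nat.lt_succ_self B), h3⟩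

/-- If the value `B` sits left of position `q`, the value `A < B` right of it, and `τ q > B`, then
some down oriented separated pair straddles `q` with its lower value in `[A, B)`. -/
lemma exists_downSepPair {n : ℕ} (τ : Equiv.Perm (Fin n)) {A B q : Fin n} (hAB : A < B)
    (hBq : τ.symm B < q) (hqA : q < τ.symm A) (hq : B < τ q) :
    ∃ c : Fin n, A ≤ c ∧ c < B ∧ DownSepPair τ c := by
  obtain ⟨c, hAc, hcB, ⟨hcn, hc⟩, hc'⟩ :=
    exists_crossing_s1 (fun v => ∃ h : v < n, q < τ.symm ⟨v, h⟩) (Fin.lt_def.1 hAB).le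
      ⟨A.2, hqA⟩ (fun ⟨_, h⟩ => lt_asymm h hBq)
  have hb : c + 1 < n := lt_of_le_of_lt hcB B.2
  have hq' : c + 1 < (τ q : ℕ) := lt_of_le_of_lt hcB hq
  have hlt : τ.symm ⟨c + 1, hb⟩ < q := by
    refine lt_of_le_of_ne (not_lt.1 fun h => hc' ⟨hb, h⟩) fun h => ?_
    rw [← h, Equiv.apply_symm_apply] at hq'
    exact lt_irrefl _ hq'
  exact ⟨⟨c, hcn⟩, hAc, hcB, hb, hlt.trans hc, q, hlt, hc, hq'⟩

/-- The mirror image of `exists_downSepPair`. -/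
lemma exists_upSepPair {n : ℕ} (τ : Equiv.Perm (Fin n)) {A B q : Fin n} (hAB : A < B)
    (hAq : τ.symm A < q) (hqB : q < τ.symm B) (hq : B < τ q) :
    ∃ c : Fin n, A ≤ c ∧ c < B ∧ UpSepPair τ c := by
  obtain ⟨c, hAc, hcB, ⟨hcn, hc⟩, hc'⟩ :=
    exists_crossing_s1 (fun v => ∃ h : v < n, τ.symm ⟨v, h⟩ < q) (Fin.lt_def.1 hAB).le
      ⟨A.2, hAq⟩ (fun ⟨_, h⟩ => lt_asymm h hqB)
  have hb : c + 1 < n := lt_of_le_of_lt hcB B.2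
  have hq' : c + 1 < (τ q : ℕ) := lt_of_le_of_lt hcB hq
  have hlt : q < τ.symm ⟨c + 1, hb⟩ := by
    refine lt_of_le_of_ne (not_lt.1 fun h => hc' ⟨hb, h⟩) fun h => ?_
    rw [h, Equiv.apply_symm_apply] at hq'
    exact lt_irrefl _ hq'
  exact ⟨⟨c, hcn⟩, hAc, hcB, hb, hc.trans hlt, q, hc, hlt, hq'⟩

/-- The map on values induced by an occurrence `α` of `σ` in `τ`: the value `v` of `σ` goes to the
value of `τ` that plays its role in the occurrence. -/
def valueMap {m n : ℕ} (σ : Equiv.Perm (Fin m)) (τ : Equiv.Perm (Fin n)) (α : Fin m → Fin n)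
    (v : Fin m) : Fin n :=
  τ (α (σ.symm v))

section Occurrence

variable {m n : ℕ} {σ : Equiv.Perm (Fin m)} {τ : Equiv.Perm (Fin n)} {α : Fin m → Fin n}

lemma valueMap_strictMono (hα : ∀ i j : Fin m, (τ (α i) < τ (α j) ↔ σ i < σ j)) :
    StrictMono (valueMap σ τ α) := by
  intro v w h
  rw [valueMap, valueMap, hα]
  simpa using h

/-- The upper bound is phrased over all values `b > a` rather than for `a + 1`, which is the form
needed to compare consecutive pairs of a chain. -/
lemma DownSepPair.exists_of_contains (hmono : StrictMono α)
    (hα : ∀ i j : Fin m, (τ (α i) < τ (α j) ↔ σ i < σ j)) {a : Fin m} (h : DownSepPair σ a) :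
    ∃ c : Fin n, valueMap σ τ α a ≤ c ∧ (∀ b, a < b → c < valueMap σ τ α b) ∧
      DownSepPair τ c := by
  obtain ⟨hb, -, p, h1, h2, h3⟩ := h
  have hg := valueMap_strictMono hα
  obtain ⟨c, hc1, hc2, hc3⟩ := exists_downSepPair τ (A := valueMap σ τ α a)
    (B := valueMap σ τ α ⟨a + 1, hb⟩) (q := α p)
    (hg (Fin.lt_def.2 (Nat.lt_succ_self a)))
    (by simpa [valueMap] using hmono h1) (by simpa [valueMap] using hmono h2)
    ((hα _ _).2 (by simpa [Fin.lt_def] using h3))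
  exact ⟨c, hc1, fun b hab => hc2.trans_le (hg.monotone (Fin.le_def.2 hab)), hc3⟩

lemma UpSepPair.exists_of_contains (hmono : StrictMono α)
    (hα : ∀ i j : Fin m, (τ (α i) < τ (α j) ↔ σ i < σ j)) {a : Fin m} (h : UpSepPair σ a) :
    ∃ c : Fin n, valueMap σ τ α a ≤ c ∧ (∀ b, a < b → c < valueMap σ τ α b) ∧
      UpSepPair τ c := by
  obtain ⟨hb, -, p, h1, h2, h3⟩ := h
  have hg := valueMap_strictMono hα
  obtain ⟨c, hc1, hc2, hc3⟩ := exists_upSepPair τ (A := valueMap σ τ α a)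
    (B := valueMap σ τ α ⟨a + 1, hb⟩) (q := α p)
    (hg (Fin.lt_def.2 (Nat.lt_succ_self a)))
    (by simpa [valueMap] using hmono h1) (by simpa [valueMap] using hmono h2)
    ((hα _ _).2 (by simpa [Fin.lt_def] using h3))
  exact ⟨c, hc1, fun b hab => hc2.trans_le (hg.monotone (Fin.le_def.2 hab)), hc3⟩

end Occurrence

lemma AltChain.exists_of_contains {m n : ℕ} {σ : Equiv.Perm (Fin m)} {τ : Equiv.Perm (Fin n)}
    (hc : Pattern.Contains τ σ) {d : Bool} {t : ℕ} {f : Fin t → Fin m} (hf : AltChain σ d f) :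
    ∃ f' : Fin t → Fin n, AltChain τ d f' := by
  obtain ⟨α, hmono, hα⟩ := hc
  have key : ∀ j : Fin t, ∃ c : Fin n, valueMap σ τ α (f j) ≤ c ∧
      (∀ b, f j < b → c < valueMap σ τ α b) ∧
      if ((j : ℕ) % 2 = 0) ↔ (d = true) then DownSepPair τ c else UpSepPair τ c := by
    intro j
    have hj := hf.2 j
    split_ifs at hj ⊢ with hpar
    · exact hj.exists_of_contains hmono hα
    · exact hj.exists_of_contains hmono hα
  choose f' h1 h2 h3 using key
  exact ⟨f', fun i j hij => (h2 i _ (hf.1 hij)).trans_le (h1 j), h3⟩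

lemma revTier_le_of_contains {m n : ℕ} {σ : Equiv.Perm (Fin m)} {τ : Equiv.Perm (Fin n)}
    (hc : Pattern.Contains τ σ) : revTier σ ≤ revTier τ := by
  -- On an unbounded set `sSup` would be the junk value `0`; chain lengths are at most `n`.
  have hbdd : BddAbove {t : ℕ | ∃ f : Fin t → Fin n, AltChain τ true f} := by
    refine ⟨n, ?_⟩
    rintro t ⟨f, hf⟩
    simpa using Fintype.card_le_of_injective f hf.1.injective
  -- The empty chain makes the set of chain lengths of `σ` nonempty.
  refine csSup_le_csSup hbdd ⟨0, Fin.elim0, fun i => i.elim0, fun j => j.elim0⟩ ?_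
  rintro t ⟨f, hf⟩
  exact hf.exists_of_contains hc

/-- rev-tier is monotone under pattern containment, so for each `t` the
permutations of rev-tier at most `t` form a permutation class (downward closed set). -/
theorem revTier_monotone_and_class :
    (∀ {m n : ℕ} (σ : Equiv.Perm (Fin m)) (τ : Equiv.Perm (Fin n)),
      Pattern.Contains τ σ → revTier σ ≤ revTier τ) ∧
    (∀ (t : ℕ) {m n : ℕ} (σ : Equiv.Perm (Fin m)) (τ : Equiv.Perm (Fin n)),
      Pattern.Contains τ σ → revTier τ ≤ t → revTier σ ≤ t) := by
  exact ⟨fun _ _ hc => revTier_le_of_contains hc,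
    fun _ _ _ _ _ hc ht => (revTier_le_of_contains hc).trans ht⟩
end

section
/- A permutation has rev-tier at most 1 if and only if it avoids each of the permutations 2413, 2431, and 23154. Equivalently, the class of 2-reverse pass sortable permutations is Av(2413, 2431, 23154). -/
/-! ### Occurrences of the three patterns -/

theorem contains_p2413_iff {n : ℕ} (σ : Equiv.Perm (Fin n)) :
    Pattern.Contains σ p2413 ↔ ∃ w x y z : Fin n, w < x ∧ x < y ∧ y < z ∧
      σ y < σ w ∧ σ w < σ z ∧ σ z < σ x := by
  constructor
  · rintro ⟨α, hα, h⟩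
    exact ⟨α 0, α 1, α 2, α 3, hα (by decide), hα (by decide), hα (by decide),
      (h _ _).2 (by decide), (h _ _).2 (by decide), (h _ _).2 (by decide)⟩
  · rintro ⟨w, x, y, z, h1, h2, h3, h4, h5, h6⟩
    refine ⟨![w, x, y, z], ?_, ?_⟩
    · rw [Fin.strictMono_iff_lt_succ]
      intro i
      fin_cases i <;> simp <;> assumption
    · intro i j
      fin_cases i <;> fin_cases j <;> simp [p2413] <;> order

theorem contains_p2431_iff {n : ℕ} (σ : Equiv.Perm (Fin n)) :
    Pattern.Contains σ p2431 ↔ ∃ w x y z : Fin n, w < x ∧ x < y ∧ y < z ∧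
      σ z < σ w ∧ σ w < σ y ∧ σ y < σ x := by
  constructor
  · rintro ⟨α, hα, h⟩
    exact ⟨α 0, α 1, α 2, α 3, hα (by decide), hα (by decide), hα (by decide),
      (h _ _).2 (by decide), (h _ _).2 (by decide), (h _ _).2 (by decide)⟩
  · rintro ⟨w, x, y, z, h1, h2, h3, h4, h5, h6⟩
    refine ⟨![w, x, y, z], ?_, ?_⟩
    · rw [Fin.strictMono_iff_lt_succ]
      intro i
      fin_cases i <;> simp <;> assumption
    · intro i j
      fin_cases i <;> fin_cases j <;> simp [p2431] <;> order

theorem contains_p23154_iff {n : ℕ} (σ : Equiv.Perm (Fin n)) :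
    Pattern.Contains σ p23154 ↔ ∃ v w x y z : Fin n, v < w ∧ w < x ∧ x < y ∧ y < z ∧
      σ x < σ v ∧ σ v < σ w ∧ σ w < σ z ∧ σ z < σ y := by
  constructor
  · rintro ⟨α, hα, h⟩
    exact ⟨α 0, α 1, α 2, α 3, α 4, hα (by decide), hα (by decide), hα (by decide),
      hα (by decide), (h _ _).2 (by decide), (h _ _).2 (by decide), (h _ _).2 (by decide),
      (h _ _).2 (by decide)⟩
  · rintro ⟨v, w, x, y, z, h1, h2, h3, h4, h5, h6, h7, h8⟩
    refine ⟨![v, w, x, y, z], ?_, ?_⟩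
    · rw [Fin.strictMono_iff_lt_succ]
      intro i
      fin_cases i <;> simp <;> assumption
    · intro i j
      fin_cases i <;> fin_cases j <;> simp [p23154] <;> order

/-! ### Separated pairs from occurrences of 231 and 132 -/

/-- If a predicate holds at `a` and fails at `b > a`, it switches between two consecutive
integers of `[a, b]`. -/
theorem exists_switch (P : ℕ → Prop) {a b : ℕ} (hab : a < b) (ha : P a) (hb : ¬ P b) :
    ∃ i, a ≤ i ∧ i < b ∧ P i ∧ ¬ P (i + 1) := by
  by_contra! H
  have key : ∀ i, a ≤ i → i ≤ b → P i := by
    intro i hi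
    induction i, hi using Nat.le_induction with
    | base => exact fun _ => ha
    | succ k hk ih => exact fun h => H k hk (by omega) (ih (by omega))
  exact hb (key b hab.le le_rfl)

/-- An occurrence of `231` at positions `x < p < y` yields a down oriented separated pair whose
values lie between those of the `1` and the `2`. -/
theorem exists_downSepPair_s2 {n : ℕ} (σ : Equiv.Perm (Fin n)) {x p y : Fin n}
    (hxp : x < p) (hpy : p < y) (h1 : σ y < σ x) (h2 : σ x < σ p) :
    ∃ a : Fin n, DownSepPair σ a ∧ σ y ≤ a ∧ a < σ x := by
  obtain ⟨i, hi1, hi2, hPi, hPs⟩ :=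
    exists_switch (fun i => ∃ h : i < n, p < σ.symm ⟨i, h⟩) (a := σ y) (b := σ x) h1
      ⟨(σ y).isLt, by simpa using hpy⟩ (by simpa using hxp.le)
  obtain ⟨hi, hPi⟩ := hPi
  have hx := (σ x).isLt
  have hs : i + 1 < n := by omega
  have hle : σ.symm ⟨i + 1, hs⟩ ≤ p := not_lt.1 fun h => hPs ⟨hs, h⟩
  have hne : σ.symm ⟨i + 1, hs⟩ ≠ p := by
    rintro h
    rw [Equiv.symm_apply_eq] at h
    rw [← h, Fin.lt_def] at h2
    simp at h2
    omega
  have hlt := lt_of_le_of_ne hle hne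
  refine ⟨⟨i, hi⟩, ⟨hs, hlt.trans hPi, p, hlt, hPi, ?_⟩, hi1, hi2⟩
  rw [Fin.lt_def] at h2
  simp only
  omega

/-- An occurrence of `132` at positions `x < p < y` yields an up oriented separated pair whose
values lie between those of the `1` and the `2`. -/
theorem exists_upSepPair_s2 {n : ℕ} (σ : Equiv.Perm (Fin n)) {x p y : Fin n}
    (hxp : x < p) (hpy : p < y) (h1 : σ x < σ y) (h2 : σ y < σ p) :
    ∃ b : Fin n, UpSepPair σ b ∧ σ x ≤ b ∧ b < σ y := by
  obtain ⟨i, hi1, hi2, hPi, hPs⟩ :=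
    exists_switch (fun i => ∃ h : i < n, σ.symm ⟨i, h⟩ < p) (a := σ x) (b := σ y) h1
      ⟨(σ x).isLt, by simpa using hxp⟩ (by simpa using hpy.le)
  obtain ⟨hi, hPi⟩ := hPi
  have hy := (σ y).isLt
  have hs : i + 1 < n := by omega
  have hle : p ≤ σ.symm ⟨i + 1, hs⟩ := not_lt.1 fun h => hPs ⟨hs, h⟩
  have hne : σ.symm ⟨i + 1, hs⟩ ≠ p := by
    rintro h
    rw [Equiv.symm_apply_eq] at h
    rw [← h, Fin.lt_def] at h2
    simp at h2
    omega
  have hlt := lt_of_le_of_ne hle hne.symm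
  refine ⟨⟨i, hi⟩, ⟨hs, hPi.trans hlt, p, hPi, hlt, ?_⟩, hi1, hi2⟩
  rw [Fin.lt_def] at h2
  simp only
  omega

/-! ### Rev-tier at least two -/

theorem two_le_revTier_iff {n : ℕ} (σ : Equiv.Perm (Fin n)) :
    2 ≤ revTier σ ↔ ∃ a b : Fin n, a < b ∧ DownSepPair σ a ∧ UpSepPair σ b := by
  have hbdd : BddAbove {t : ℕ | ∃ f : Fin t → Fin n, AltChain σ true f} := by
    refine ⟨n, ?_⟩
    rintro t ⟨f, hf, -⟩
    simpa using Fintype.card_le_of_injective f hf.injective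
  constructor
  · intro h
    have hne : {t : ℕ | ∃ f : Fin t → Fin n, AltChain σ true f}.Nonempty :=
      ⟨0, Fin.elim0, fun i => i.elim0, fun i => i.elim0⟩
    obtain ⟨f, hf, hc⟩ := Nat.sSup_mem hne hbdd
    change 2 ≤ sSup _ at h
    exact ⟨f ⟨0, by omega⟩, f ⟨1, by omega⟩, hf (by simp),
      by simpa using hc ⟨0, by omega⟩, by simpa using hc ⟨1, by omega⟩⟩
  · rintro ⟨a, b, hab, ha, hb⟩
    refine le_csSup hbdd ⟨![a, b], ?_, ?_⟩
    · rw [Fin.strictMono_iff_lt_succ]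
      intro i
      fin_cases i
      simpa using hab
    · intro j
      fin_cases j
      · simpa using ha
      · simpa using hb

/-! ### Patterns from separated pairs -/

/-- A down oriented separated pair below an up oriented one forces one of the three patterns. -/
theorem contains_of_downSepPair_of_upSepPair {n : ℕ} (σ : Equiv.Perm (Fin n)) {a b : Fin n}
    (hab : a < b) (ha : DownSepPair σ a) (hb : UpSepPair σ b) :
    Pattern.Contains σ p2413 ∨ Pattern.Contains σ p2431 ∨ Pattern.Contains σ p23154 := by
  obtain ⟨ha1, -, p, hXp, hpA, hp⟩ := ha
  obtain ⟨hb1, -, q, hBq, hqY, hq⟩ := hb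
  rw [contains_p2413_iff, contains_p2431_iff, contains_p23154_iff]
  obtain ⟨X, hX⟩ : ∃ X, σ.symm ⟨(a : ℕ) + 1, ha1⟩ = X := ⟨_, rfl⟩
  obtain ⟨A, hA⟩ : ∃ A, σ.symm a = A := ⟨_, rfl⟩
  obtain ⟨B, hB⟩ : ∃ B, σ.symm b = B := ⟨_, rfl⟩
  obtain ⟨Y, hY⟩ : ∃ Y, σ.symm ⟨(b : ℕ) + 1, hb1⟩ = Y := ⟨_, rfl⟩
  rw [hX] at hXp
  rw [hA] at hpA
  rw [hB] at hBq
  rw [hY] at hqY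
  rw [Equiv.symm_apply_eq] at hX hA hB hY
  have vX : (σ X : ℕ) = a + 1 := by rw [← hX]
  have vA : (σ A : ℕ) = a := by rw [← hA]
  have vB : (σ B : ℕ) = b := by rw [← hB]
  have vY : (σ Y : ℕ) = b + 1 := by rw [← hY]
  rw [Fin.lt_def] at hab
  rcases lt_trichotomy q A with hqA | hqA | hqA
  · rcases lt_trichotomy A Y with hAY | hAY | hAY
    · exact Or.inl ⟨B, q, A, Y, hBq, hqA, hAY, by omega, by omega, by omega⟩
    · subst hAY
      omega
    · exact Or.inr (Or.inl ⟨B, q, Y, A, hBq, hqY, hAY, by omega, by omega, by omega⟩)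
  · subst hqA
    omega
  · rcases lt_trichotomy (σ p) (σ Y) with hpY | hpY | hpY
    · exact Or.inr (Or.inr ⟨X, p, A, q, Y, hXp, hpA, hqA, hqY, by omega, by omega, hpY,
        by omega⟩)
    · have := σ.injective hpY
      order
    · exact Or.inl ⟨X, p, A, Y, hXp, hpA, hqA.trans hqY, by omega, by omega, hpY⟩

/-- rev-tier at most 1 iff avoiding 2413, 2431 and 23154. -/
theorem revTier_le_one_iff {n : ℕ} (σ : Equiv.Perm (Fin n)) :
    revTier σ ≤ 1 ↔
      (Pattern.Avoids σ p2413 ∧ Pattern.Avoids σ p2431 ∧ Pattern.Avoids σ p23154) := by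
  unfold Pattern.Avoids
  rw [← not_or, ← not_or, ← not_lt]
  refine not_congr ((two_le_revTier_iff σ).trans ⟨?_, ?_⟩)
  · rintro ⟨a, b, hab, ha, hb⟩
    exact contains_of_downSepPair_of_upSepPair σ hab ha hb
  · rw [contains_p2413_iff, contains_p2431_iff, contains_p23154_iff]
    rintro (⟨w, x, y, z, h1, h2, h3, h4, h5, h6⟩ | ⟨w, x, y, z, h1, h2, h3, h4, h5, h6⟩ |
      ⟨v, w, x, y, z, h1, h2, h3, h4, h5, h6, h7, h8⟩)
    · obtain ⟨a, ha, -, ha'⟩ := exists_downSepPair_s2 σ h1 h2 h4 (h5.trans h6)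
      obtain ⟨b, hb, hb', -⟩ := exists_upSepPair_s2 σ h1 (h2.trans h3) h5 h6
      exact ⟨a, b, ha'.trans_le hb', ha, hb⟩
    · obtain ⟨a, ha, -, ha'⟩ := exists_downSepPair_s2 σ h1 (h2.trans h3) h4 (h5.trans h6)
      obtain ⟨b, hb, hb', -⟩ := exists_upSepPair_s2 σ h1 h2 h5 h6
      exact ⟨a, b, ha'.trans_le hb', ha, hb⟩
    · obtain ⟨a, ha, -, ha'⟩ := exists_downSepPair_s2 σ h1 h2 h5 h6
      obtain ⟨b, hb, hb', -⟩ := exists_upSepPair_s2 σ (h2.trans h3) h4 h7 h8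
      exact ⟨a, b, (ha'.trans h6).trans_le hb', ha, hb⟩
end

section
/- A permutation has rev-tier at most 2 if and only if it avoids each of the eleven permutations 24153, 24513, 24531, 42513, 42531, 231564, 261453, 523164, 562413, 562431, and 6723154; that is, these eleven permutations form the basis B_2 of the class of 3-reverse pass sortable permutations. -/
/-! ### Rev-tier at least three -/

theorem bddAbove_altChain {n : ℕ} (σ : Equiv.Perm (Fin n)) :
    BddAbove {t : ℕ | ∃ f : Fin t → Fin n, AltChain σ true f} := by
  refine ⟨n, ?_⟩
  rintro t ⟨f, hf, -⟩
  simpa using Fintype.card_le_of_injective f hf.injective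

theorem three_le_revTier_iff {n : ℕ} (σ : Equiv.Perm (Fin n)) :
    3 ≤ revTier σ ↔ ∃ a b c : Fin n, a < b ∧ b < c ∧
      DownSepPair σ a ∧ UpSepPair σ b ∧ DownSepPair σ c := by
  constructor
  · intro h
    have hne : {t : ℕ | ∃ f : Fin t → Fin n, AltChain σ true f}.Nonempty :=
      ⟨0, Fin.elim0, fun i => i.elim0, fun i => i.elim0⟩
    obtain ⟨f, hf, hs⟩ := Nat.sSup_mem hne (bddAbove_altChain σ)
    change 3 ≤ sSup _ at h
    refine ⟨f ⟨0, by omega⟩, f ⟨1, by omega⟩, f ⟨2, by omega⟩, hf (by simp), hf (by simp), ?_⟩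
    have h0 := hs ⟨0, by omega⟩
    have h1 := hs ⟨1, by omega⟩
    have h2 := hs ⟨2, by omega⟩
    simp only [Nat.zero_mod, Nat.mod_self, if_true, iff_self] at h0 h2
    simp at h1
    exact ⟨h0, h1, h2⟩
  · rintro ⟨a, b, c, hab, hbc, ha, hb, hc⟩
    refine le_csSup (bddAbove_altChain σ) ⟨![a, b, c], ?_, ?_⟩
    · rw [Fin.strictMono_iff_lt_succ]
      intro i
      fin_cases i
      · exact hab
      · exact hbc
    · intro j
      fin_cases j
      · simpa using ha
      · simpa using hb
      · simpa using hc

theorem exists_crossing_s3 (Q : ℕ → Prop) {m k : ℕ} (hmk : m ≤ k) (hm : ¬ Q m) (hk : Q k) :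
    ∃ u, m ≤ u ∧ u < k ∧ ¬ Q u ∧ Q (u + 1) := by
  induction k, hmk using Nat.le_induction with
  | base => exact absurd hk hm
  | succ k hle ih =>
    by_cases h : Q k
    · obtain ⟨u, h1, h2, h3⟩ := ih h
      exact ⟨u, h1, by omega, h3⟩
    · exact ⟨k, hle, by omega, h, hk⟩

theorem exists_downSepPair_s3 {n : ℕ} (σ : Equiv.Perm (Fin n)) {x y z : Fin n}
    (hxz : x < z) (hzy : z < y) (hyx : σ y < σ x) (hz : σ x < σ z) :
    ∃ u : Fin n, σ y ≤ u ∧ u < σ x ∧ DownSepPair σ u := by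
  obtain ⟨u, h1, h2, h3, h4, h5⟩ := exists_crossing_s3
    (fun v => ∃ h : v < n, σ.symm ⟨v, h⟩ < z) (Fin.le_def.mp hyx.le)
    (by simpa using hzy.le) (by simpa using hxz)
  have hun : u < n := by omega
  have hle : z ≤ σ.symm ⟨u, hun⟩ := not_lt.mp fun h => h3 ⟨hun, h⟩
  -- the entry at `z` is too large to be `u`
  have hne : z ≠ σ.symm ⟨u, hun⟩ := by
    rintro rfl
    simp only [Equiv.apply_symm_apply, Fin.lt_def] at hz
    omega
  have hlt := lt_of_le_of_ne hle hne
  exact ⟨⟨u, hun⟩, h1, h2, h4, h5.trans hlt, z, h5, hlt, by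
    change u + 1 < (σ z : ℕ)
    simp only [Fin.lt_def] at hz h2
    omega⟩

theorem exists_upSepPair_s3 {n : ℕ} (σ : Equiv.Perm (Fin n)) {x y z : Fin n}
    (hxz : x < z) (hzy : z < y) (hxy : σ x < σ y) (hz : σ y < σ z) :
    ∃ u : Fin n, σ x ≤ u ∧ u < σ y ∧ UpSepPair σ u := by
  obtain ⟨u, h1, h2, h3, h4, h5⟩ := exists_crossing_s3
    (fun v => ∃ h : v < n, z < σ.symm ⟨v, h⟩) (Fin.le_def.mp hxy.le)
    (by simpa using hxz.le) (by simpa using hzy)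
  have hun : u < n := by omega
  have hle : σ.symm ⟨u, hun⟩ ≤ z := not_lt.mp fun h => h3 ⟨hun, h⟩
  have hne : σ.symm ⟨u, hun⟩ ≠ z := by
    rintro rfl
    simp only [Equiv.apply_symm_apply, Fin.lt_def] at hz
    omega
  have hlt := lt_of_le_of_ne hle hne
  exact ⟨⟨u, hun⟩, h1, h2, h4, hlt.trans h5, z, hlt, h5, by
    change u + 1 < (σ z : ℕ)
    simp only [Fin.lt_def] at hz h2
    omega⟩

/-! ### Zigzags -/

/-- A zigzag of `σ` on positions satisfying `P`: positions `a b c d` carrying increasing values,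
such that `b` precedes `a` and `c`, and `d` precedes `c`, each of these three pairs being separated
by a position whose value exceeds both values of the pair. -/
def Zigzag {n : ℕ} (σ : Equiv.Perm (Fin n)) (P : Fin n → Prop) : Prop :=
  ∃ b, P b ∧ ∃ a, (P a ∧ σ a < σ b) ∧
    (∃ z, P z ∧ b < z ∧ z < a ∧ σ b < σ z) ∧
    ∃ c, (P c ∧ σ b < σ c) ∧
      (∃ z, P z ∧ b < z ∧ z < c ∧ σ c < σ z) ∧
      ∃ d, (P d ∧ σ c < σ d) ∧
        (∃ z, P z ∧ d < z ∧ z < c ∧ σ d < σ z)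

instance {n : ℕ} (σ : Equiv.Perm (Fin n)) (P : Fin n → Prop) [DecidablePred P] :
    Decidable (Zigzag σ P) := by
  unfold Zigzag
  infer_instance

theorem Zigzag.mono {n : ℕ} {σ : Equiv.Perm (Fin n)} {P Q : Fin n → Prop}
    (hPQ : ∀ x, P x → Q x) (h : Zigzag σ P) : Zigzag σ Q := by
  obtain ⟨b, hb, a, ⟨ha, hab⟩, ⟨x, hx, hx'⟩, c, ⟨hc, hbc⟩, ⟨y, hy, hy'⟩, d, ⟨hd, hcd⟩, z, hz, hz'⟩ := h
  exact ⟨b, hPQ _ hb, a, ⟨hPQ _ ha, hab⟩, ⟨x, hPQ _ hx, hx'⟩, c, ⟨hPQ _ hc, hbc⟩,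
    ⟨y, hPQ _ hy, hy'⟩, d, ⟨hPQ _ hd, hcd⟩, z, hPQ _ hz, hz'⟩

theorem Zigzag.map {n m : ℕ} {σ : Equiv.Perm (Fin n)} {τ : Equiv.Perm (Fin m)}
    {α : Fin m → Fin n} (hα : StrictMono α)
    (hv : ∀ i j, σ (α i) < σ (α j) ↔ τ i < τ j) (h : Zigzag τ fun _ => True) :
    Zigzag σ (· ∈ Set.range α) := by
  obtain ⟨b, -, a, ⟨-, hab⟩, ⟨x, -, hx1, hx2, hx3⟩, c, ⟨-, hbc⟩, ⟨y, -, hy1, hy2, hy3⟩,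
    d, ⟨-, hcd⟩, z, -, hz1, hz2, hz3⟩ := h
  exact ⟨α b, ⟨b, rfl⟩, α a, ⟨⟨a, rfl⟩, (hv _ _).2 hab⟩,
    ⟨α x, ⟨x, rfl⟩, hα hx1, hα hx2, (hv _ _).2 hx3⟩, α c, ⟨⟨c, rfl⟩, (hv _ _).2 hbc⟩,
    ⟨α y, ⟨y, rfl⟩, hα hy1, hα hy2, (hv _ _).2 hy3⟩, α d, ⟨⟨d, rfl⟩, (hv _ _).2 hcd⟩,
    α z, ⟨z, rfl⟩, hα hz1, hα hz2, (hv _ _).2 hz3⟩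

/-- The gluing step: loose down, up, down pairs at values `σ v₁ < σ w₁ ≤ σ v₂ < σ w₂ ≤ σ v₃ < σ w₃`
yield a zigzag. -/
theorem zigzag_of_loose {n : ℕ} (σ : Equiv.Perm (Fin n)) {v₁ w₁ z₁ v₂ w₂ z₂ v₃ w₃ z₃ : Fin n}
    (h₁ : σ v₁ < σ w₁) (h₁₂ : σ w₁ ≤ σ v₂) (h₂ : σ v₂ < σ w₂) (h₂₃ : σ w₂ ≤ σ v₃)
    (h₃ : σ v₃ < σ w₃)
    (p₁ : w₁ < z₁) (q₁ : z₁ < v₁) (r₁ : σ w₁ < σ z₁)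
    (p₂ : v₂ < z₂) (q₂ : z₂ < w₂) (r₂ : σ w₂ < σ z₂)
    (p₃ : w₃ < z₃) (q₃ : z₃ < v₃) (r₃ : σ w₃ < σ z₃) :
    Zigzag σ fun _ => True := by
  -- Glue `w₁` to `v₂`: if `w₁` lies left of `z₂` it can serve as `v₂`, else `v₂` can serve as `w₁`.
  obtain ⟨b, hab, hbc, ⟨x, hx⟩, hbz⟩ : ∃ b, σ v₁ < σ b ∧ σ b < σ w₂ ∧
      (∃ x, b < x ∧ x < v₁ ∧ σ b < σ x) ∧ b < z₂ := by
    rcases lt_or_ge w₁ z₂ with h | h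
    · exact ⟨w₁, h₁, h₁₂.trans_lt h₂, ⟨z₁, p₁, q₁, r₁⟩, h⟩
    · exact ⟨v₂, h₁.trans_le h₁₂, h₂, ⟨z₂, p₂, (h.trans_lt p₁).trans q₁, h₂.trans r₂⟩, p₂⟩
  -- Glue `w₂` to `v₃` in the same way.
  rcases lt_or_ge z₃ w₂ with h | h
  · exact ⟨b, trivial, v₁, ⟨trivial, hab⟩, ⟨x, trivial, hx⟩, w₂, ⟨trivial, hbc⟩,
      ⟨z₂, trivial, hbz, q₂, r₂⟩, w₃, ⟨trivial, h₂₃.trans_lt h₃⟩, z₃, trivial, p₃, h, r₃⟩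
  · exact ⟨b, trivial, v₁, ⟨trivial, hab⟩, ⟨x, trivial, hx⟩, v₃, ⟨trivial, hbc.trans_le h₂₃⟩,
      ⟨z₃, trivial, hbz.trans (q₂.trans_le h), q₃, h₃.trans r₃⟩, w₃, ⟨trivial, h₃⟩,
      z₃, trivial, p₃, q₃, r₃⟩

theorem three_le_revTier_iff_zigzag {n : ℕ} (σ : Equiv.Perm (Fin n)) :
    3 ≤ revTier σ ↔ Zigzag σ fun _ => True := by
  rw [three_le_revTier_iff]
  constructor
  · rintro ⟨a, b, c, hab, hbc, ⟨ha, -, x, hx1, hx2, hx3⟩, ⟨hb, -, y, hy1, hy2, hy3⟩,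
      ⟨hc, -, z, hz1, hz2, hz3⟩⟩
    refine zigzag_of_loose σ ?_ ?_ ?_ ?_ ?_ hx1 hx2 ?_ hy1 hy2 ?_ hz1 hz2 ?_ <;>
      simp only [Equiv.apply_symm_apply, Fin.lt_def, Fin.le_def] at * <;> omega
  · rintro ⟨b, -, a, ⟨-, hab⟩, ⟨x, -, hx1, hx2, hx3⟩, c, ⟨-, hbc⟩, ⟨y, -, hy1, hy2, hy3⟩,
      d, ⟨-, hcd⟩, z, -, hz1, hz2, hz3⟩
    obtain ⟨u, -, hu, hu'⟩ := exists_downSepPair_s3 σ hx1 hx2 hab hx3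
    obtain ⟨v, hv, hv1, hv'⟩ := exists_upSepPair_s3 σ hy1 hy2 hbc hy3
    obtain ⟨w, hw, -, hw'⟩ := exists_downSepPair_s3 σ hz1 hz2 hcd hz3
    exact ⟨u, v, w, hu.trans_le hv, hv1.trans_le hw, hu', hv', hw'⟩

/-! ### Zigzags and the eleven patterns -/

/-- An occurrence of `τ` may be certified by listing its positions and its values in increasing
order. -/
theorem contains_of_strictMono {n k : ℕ} {σ : Equiv.Perm (Fin n)} {τ : Equiv.Perm (Fin k)}
    (α : Fin k → Fin n) (hα : StrictMono α) (hv : StrictMono fun i => σ (α (τ.symm i))) :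
    Pattern.Contains σ τ :=
  ⟨α, hα, fun i j => by simpa using hv.lt_iff_lt (a := τ i) (b := τ j)⟩

theorem strictMono_vec5 {n : ℕ} {f : Fin 5 → Fin n} (h0 : f 0 < f 1) (h1 : f 1 < f 2)
    (h2 : f 2 < f 3) (h3 : f 3 < f 4) : StrictMono f := by
  rw [Fin.strictMono_iff_lt_succ]
  intro i
  fin_cases i <;> assumption

theorem strictMono_vec6 {n : ℕ} {f : Fin 6 → Fin n} (h0 : f 0 < f 1) (h1 : f 1 < f 2)
    (h2 : f 2 < f 3) (h3 : f 3 < f 4) (h4 : f 4 < f 5) : StrictMono f := by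
  rw [Fin.strictMono_iff_lt_succ]
  intro i
  fin_cases i <;> assumption

theorem strictMono_vec7 {n : ℕ} {f : Fin 7 → Fin n} (h0 : f 0 < f 1) (h1 : f 1 < f 2)
    (h2 : f 2 < f 3) (h3 : f 3 < f 4) (h4 : f 4 < f 5) (h5 : f 5 < f 6) : StrictMono f := by
  rw [Fin.strictMono_iff_lt_succ]
  intro i
  fin_cases i <;> assumption

/-- `σ` contains one of the eleven patterns. -/
def ContainsBasis {n : ℕ} (σ : Equiv.Perm (Fin n)) : Prop :=
  Pattern.Contains σ p24153 ∨ Pattern.Contains σ p24513 ∨ Pattern.Contains σ p24531 ∨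
  Pattern.Contains σ p42513 ∨ Pattern.Contains σ p42531 ∨ Pattern.Contains σ p231564 ∨
  Pattern.Contains σ p261453 ∨ Pattern.Contains σ p523164 ∨ Pattern.Contains σ p562413 ∨
  Pattern.Contains σ p562431 ∨ Pattern.Contains σ p6723154

theorem contains_p24153 {n : ℕ} {σ : Equiv.Perm (Fin n)} {x0 x1 x2 x3 x4 : Fin n}
    (h0 : x0 < x1) (h1 : x1 < x2) (h2 : x2 < x3) (h3 : x3 < x4)
    (g0 : σ x2 < σ x0) (g1 : σ x0 < σ x4) (g2 : σ x4 < σ x1) (g3 : σ x1 < σ x3) :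
    ContainsBasis σ := by
  have : Pattern.Contains σ p24153 := contains_of_strictMono ![x0, x1, x2, x3, x4]
    (strictMono_vec5 h0 h1 h2 h3) (strictMono_vec5 g0 g1 g2 g3)
  simp [ContainsBasis, this]

theorem contains_p24513 {n : ℕ} {σ : Equiv.Perm (Fin n)} {x0 x1 x2 x3 x4 : Fin n}
    (h0 : x0 < x1) (h1 : x1 < x2) (h2 : x2 < x3) (h3 : x3 < x4)
    (g0 : σ x3 < σ x0) (g1 : σ x0 < σ x4) (g2 : σ x4 < σ x1) (g3 : σ x1 < σ x2) :
    ContainsBasis σ := by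
  have : Pattern.Contains σ p24513 := contains_of_strictMono ![x0, x1, x2, x3, x4]
    (strictMono_vec5 h0 h1 h2 h3) (strictMono_vec5 g0 g1 g2 g3)
  simp [ContainsBasis, this]

theorem contains_p24531 {n : ℕ} {σ : Equiv.Perm (Fin n)} {x0 x1 x2 x3 x4 : Fin n}
    (h0 : x0 < x1) (h1 : x1 < x2) (h2 : x2 < x3) (h3 : x3 < x4)
    (g0 : σ x4 < σ x0) (g1 : σ x0 < σ x3) (g2 : σ x3 < σ x1) (g3 : σ x1 < σ x2) :
    ContainsBasis σ := by
  have : Pattern.Contains σ p24531 := contains_of_strictMono ![x0, x1, x2, x3, x4]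
    (strictMono_vec5 h0 h1 h2 h3) (strictMono_vec5 g0 g1 g2 g3)
  simp [ContainsBasis, this]

theorem contains_p42513 {n : ℕ} {σ : Equiv.Perm (Fin n)} {x0 x1 x2 x3 x4 : Fin n}
    (h0 : x0 < x1) (h1 : x1 < x2) (h2 : x2 < x3) (h3 : x3 < x4)
    (g0 : σ x3 < σ x1) (g1 : σ x1 < σ x4) (g2 : σ x4 < σ x0) (g3 : σ x0 < σ x2) :
    ContainsBasis σ := by
  have : Pattern.Contains σ p42513 := contains_of_strictMono ![x0, x1, x2, x3, x4]
    (strictMono_vec5 h0 h1 h2 h3) (strictMono_vec5 g0 g1 g2 g3)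
  simp [ContainsBasis, this]

theorem contains_p42531 {n : ℕ} {σ : Equiv.Perm (Fin n)} {x0 x1 x2 x3 x4 : Fin n}
    (h0 : x0 < x1) (h1 : x1 < x2) (h2 : x2 < x3) (h3 : x3 < x4)
    (g0 : σ x4 < σ x1) (g1 : σ x1 < σ x3) (g2 : σ x3 < σ x0) (g3 : σ x0 < σ x2) :
    ContainsBasis σ := by
  have : Pattern.Contains σ p42531 := contains_of_strictMono ![x0, x1, x2, x3, x4]
    (strictMono_vec5 h0 h1 h2 h3) (strictMono_vec5 g0 g1 g2 g3)
  simp [ContainsBasis, this]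

theorem contains_p231564 {n : ℕ} {σ : Equiv.Perm (Fin n)} {x0 x1 x2 x3 x4 x5 : Fin n}
    (h0 : x0 < x1) (h1 : x1 < x2) (h2 : x2 < x3) (h3 : x3 < x4) (h4 : x4 < x5)
    (g0 : σ x2 < σ x0) (g1 : σ x0 < σ x1) (g2 : σ x1 < σ x5) (g3 : σ x5 < σ x3) (g4 : σ x3 < σ x4) :
    ContainsBasis σ := by
  have : Pattern.Contains σ p231564 := contains_of_strictMono ![x0, x1, x2, x3, x4, x5]
    (strictMono_vec6 h0 h1 h2 h3 h4) (strictMono_vec6 g0 g1 g2 g3 g4)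
  simp [ContainsBasis, this]

theorem contains_p261453 {n : ℕ} {σ : Equiv.Perm (Fin n)} {x0 x1 x2 x3 x4 x5 : Fin n}
    (h0 : x0 < x1) (h1 : x1 < x2) (h2 : x2 < x3) (h3 : x3 < x4) (h4 : x4 < x5)
    (g0 : σ x2 < σ x0) (g1 : σ x0 < σ x5) (g2 : σ x5 < σ x3) (g3 : σ x3 < σ x4) (g4 : σ x4 < σ x1) :
    ContainsBasis σ := by
  have : Pattern.Contains σ p261453 := contains_of_strictMono ![x0, x1, x2, x3, x4, x5]
    (strictMono_vec6 h0 h1 h2 h3 h4) (strictMono_vec6 g0 g1 g2 g3 g4)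
  simp [ContainsBasis, this]

theorem contains_p523164 {n : ℕ} {σ : Equiv.Perm (Fin n)} {x0 x1 x2 x3 x4 x5 : Fin n}
    (h0 : x0 < x1) (h1 : x1 < x2) (h2 : x2 < x3) (h3 : x3 < x4) (h4 : x4 < x5)
    (g0 : σ x3 < σ x1) (g1 : σ x1 < σ x2) (g2 : σ x2 < σ x5) (g3 : σ x5 < σ x0) (g4 : σ x0 < σ x4) :
    ContainsBasis σ := by
  have : Pattern.Contains σ p523164 := contains_of_strictMono ![x0, x1, x2, x3, x4, x5]
    (strictMono_vec6 h0 h1 h2 h3 h4) (strictMono_vec6 g0 g1 g2 g3 g4)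
  simp [ContainsBasis, this]

theorem contains_p562413 {n : ℕ} {σ : Equiv.Perm (Fin n)} {x0 x1 x2 x3 x4 x5 : Fin n}
    (h0 : x0 < x1) (h1 : x1 < x2) (h2 : x2 < x3) (h3 : x3 < x4) (h4 : x4 < x5)
    (g0 : σ x4 < σ x2) (g1 : σ x2 < σ x5) (g2 : σ x5 < σ x3) (g3 : σ x3 < σ x0) (g4 : σ x0 < σ x1) :
    ContainsBasis σ := by
  have : Pattern.Contains σ p562413 := contains_of_strictMono ![x0, x1, x2, x3, x4, x5]
    (strictMono_vec6 h0 h1 h2 h3 h4) (strictMono_vec6 g0 g1 g2 g3 g4)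
  simp [ContainsBasis, this]

theorem contains_p562431 {n : ℕ} {σ : Equiv.Perm (Fin n)} {x0 x1 x2 x3 x4 x5 : Fin n}
    (h0 : x0 < x1) (h1 : x1 < x2) (h2 : x2 < x3) (h3 : x3 < x4) (h4 : x4 < x5)
    (g0 : σ x5 < σ x2) (g1 : σ x2 < σ x4) (g2 : σ x4 < σ x3) (g3 : σ x3 < σ x0) (g4 : σ x0 < σ x1) :
    ContainsBasis σ := by
  have : Pattern.Contains σ p562431 := contains_of_strictMono ![x0, x1, x2, x3, x4, x5]
    (strictMono_vec6 h0 h1 h2 h3 h4) (strictMono_vec6 g0 g1 g2 g3 g4)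
  simp [ContainsBasis, this]

theorem contains_p6723154 {n : ℕ} {σ : Equiv.Perm (Fin n)} {x0 x1 x2 x3 x4 x5 x6 : Fin n}
    (h0 : x0 < x1) (h1 : x1 < x2) (h2 : x2 < x3) (h3 : x3 < x4) (h4 : x4 < x5) (h5 : x5 < x6)
    (g0 : σ x4 < σ x2) (g1 : σ x2 < σ x3) (g2 : σ x3 < σ x6) (g3 : σ x6 < σ x5) (g4 : σ x5 < σ x0) (g5 : σ x0 < σ x1) :
    ContainsBasis σ := by
  have : Pattern.Contains σ p6723154 := contains_of_strictMono ![x0, x1, x2, x3, x4, x5, x6]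
    (strictMono_vec7 h0 h1 h2 h3 h4 h5) (strictMono_vec7 g0 g1 g2 g3 g4 g5)
  simp [ContainsBasis, this]

theorem Zigzag.contains {n : ℕ} {σ : Equiv.Perm (Fin n)} (h : Zigzag σ fun _ => True) :
    ContainsBasis σ := by
  obtain ⟨b, -, a, ⟨-, hab⟩, ⟨x, -, hx1, hx2, hx3⟩, c, ⟨-, hbc⟩, ⟨y, -, hy1, hy2, hy3⟩,
    d, ⟨-, hcd⟩, z, -, hz1, hz2, hz3⟩ := h
  have ne {p q : Fin n} (hpq : σ p < σ q) : p ≠ q := fun e => hpq.ne (congrArg σ e)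
  have neσ {p q : Fin n} (hpq : p < q) : σ p ≠ σ q := fun e => hpq.ne (σ.injective e)
  rcases lt_or_gt_of_ne (ne (hbc.trans hcd)) with hbd | hdb
  · rcases lt_or_gt_of_ne (ne (hab.trans (hbc.trans hcd))) with had | hda
    · -- order `b a d c`
      have hxd : x < d := hx2.trans had
      have hxz : x < z := hxd.trans hz1
      rcases lt_or_gt_of_ne (neσ (hxd.trans (hz1.trans hz2))) with h1 | h1
      · exact contains_p231564 hx1 hx2 had hz1 hz2 hab hx3 h1 hcd hz3
      rcases lt_or_gt_of_ne (neσ hxd) with h2 | h2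
      · exact contains_p24153 hx1 hx2 had (hz1.trans hz2) hab hbc h1 h2
      rcases lt_or_gt_of_ne (neσ hxz) with h3 | h3
      · exact contains_p24153 hx1 hx2 (had.trans hz1) hz2 hab hbc h1 h3
      · exact contains_p261453 hx1 hx2 had hz1 hz2 hab hbc hcd hz3 h3
    · rcases lt_or_gt_of_ne (ne (hab.trans hbc)) with hac | hca
      · -- order `b d a c`
        rcases lt_or_gt_of_ne (ne (hab.trans (hbc.trans (hcd.trans hz3)))) with h1 | h1
        · exact contains_p24153 hbd hda h1 hz2 hab hbc hcd hz3
        · exact contains_p24513 hbd hz1 h1 hac hab hbc hcd hz3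
      · -- order `b d c a`
        exact contains_p24531 hbd hz1 hz2 hca hab hbc hcd hz3
  · rcases lt_or_gt_of_ne (ne (hab.trans hbc)) with hac | hca
    · -- order `d b a c`
      have hba : b < a := hx1.trans hx2
      -- a separator of `b` and `a` exceeding `c` is already enough
      have key {t : Fin n} (hbt : b < t) (hta : t < a) (hct : σ c < σ t) : ContainsBasis σ := by
        rcases lt_or_gt_of_ne (neσ (hdb.trans hbt)) with h1 | h1
        · exact contains_p42513 hdb hbt hta hac hab hbc hcd h1
        rcases lt_or_gt_of_ne (ne (hab.trans (hbc.trans (hcd.trans hz3)))) with h2 | h2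
        · exact contains_p24153 hbt hta h2 hz2 hab hbc hct (h1.trans hz3)
        rcases lt_or_gt_of_ne (ne (hbc.trans (hcd.trans hz3))) with h3 | h3
        · exact contains_p42513 hdb h3 h2 hac hab hbc hcd hz3
        · exact contains_p562413 hz1 h3 hbt hta hac hab hbc hct h1 hz3
      rcases lt_or_gt_of_ne (neσ (hx2.trans hac)) with h1 | h1
      swap
      · exact key hx1 hx2 h1
      rcases lt_or_gt_of_ne (ne (hab.trans (hbc.trans (hcd.trans hz3)))) with h2 | h2
      · exact contains_p523164 hdb hx1 hx2 h2 hz2 hab hx3 h1 hcd hz3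
      rcases lt_or_gt_of_ne (ne (hbc.trans (hcd.trans hz3))) with h3 | h3
      · exact key h3 h2 (hcd.trans hz3)
      rcases lt_or_gt_of_ne (ne (hab.trans (hbc.trans hy3))) with h4 | h4
      swap
      · exact key hy1 h4 hy3
      rcases lt_or_gt_of_ne (neσ (hdb.trans hy1)) with h5 | h5
      · exact contains_p523164 hdb hx1 hx2 h4 hy2 hab hx3 h1 hcd h5
      · exact contains_p6723154 hz1 h3 hx1 hx2 h4 hy2 hab hx3 h1 hy3 h5 hz3
    · -- order `d b c a`
      rcases lt_or_gt_of_ne (neσ (hdb.trans hy1)) with h1 | h1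
      · exact contains_p42531 hdb hy1 hy2 hca hab hbc hcd h1
      rcases lt_or_gt_of_ne (ne (hbc.trans (hcd.trans hz3))) with h2 | h2
      · exact contains_p42531 hdb h2 hz2 hca hab hbc hcd hz3
      · exact contains_p562431 hz1 h2 hy1 hy2 hca hab hbc hy3 h1 hz3

theorem Pattern.Contains.zigzag {n k : ℕ} {σ : Equiv.Perm (Fin n)} {τ : Equiv.Perm (Fin k)}
    (h : Pattern.Contains σ τ) (hτ : Zigzag τ fun _ => True) : Zigzag σ fun _ => True := by
  obtain ⟨α, hα, hv⟩ := h
  exact (hτ.map hα hv).mono fun _ _ => trivial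

/-- `τ` is a basis element once it has a zigzag, and every zigzag of `τ` uses every position. -/
theorem isBasisElt_of_zigzag {n : ℕ} {τ : Equiv.Perm (Fin n)} (h : Zigzag τ fun _ => True)
    (hmin : ∀ k, ¬ Zigzag τ (· ≠ k)) : IsBasisElt 2 τ := by
  refine ⟨(three_le_revTier_iff_zigzag τ).2 h, fun m ρ hm ⟨α, hα, hv⟩ => ?_⟩
  by_contra hρ
  have hz := ((three_le_revTier_iff_zigzag ρ).1 (by omega)).map hα hv
  obtain ⟨k, hk⟩ : ∃ k, k ∉ Set.range α := by
    by_contra! hs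
    have := Fintype.card_le_of_surjective α hs
    simp at this
    omega
  exact hmin k (hz.mono fun x hx e => hk (e ▸ hx))

theorem zigzag_p24153 : Zigzag p24153 fun _ => True := by
  decide

theorem isBasisElt_p24153 : IsBasisElt 2 p24153 :=
  isBasisElt_of_zigzag zigzag_p24153 (by decide)

theorem zigzag_p24513 : Zigzag p24513 fun _ => True := by
  decide

theorem isBasisElt_p24513 : IsBasisElt 2 p24513 :=
  isBasisElt_of_zigzag zigzag_p24513 (by decide)

theorem zigzag_p24531 : Zigzag p24531 fun _ => True := by
  decide

theorem isBasisElt_p24531 : IsBasisElt 2 p24531 :=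
  isBasisElt_of_zigzag zigzag_p24531 (by decide)

theorem zigzag_p42513 : Zigzag p42513 fun _ => True := by
  decide

theorem isBasisElt_p42513 : IsBasisElt 2 p42513 :=
  isBasisElt_of_zigzag zigzag_p42513 (by decide)

theorem zigzag_p42531 : Zigzag p42531 fun _ => True := by
  decide

theorem isBasisElt_p42531 : IsBasisElt 2 p42531 :=
  isBasisElt_of_zigzag zigzag_p42531 (by decide)

theorem zigzag_p231564 : Zigzag p231564 fun _ => True := by
  decide

theorem isBasisElt_p231564 : IsBasisElt 2 p231564 :=
  isBasisElt_of_zigzag zigzag_p231564 (by decide)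

theorem zigzag_p261453 : Zigzag p261453 fun _ => True := by
  decide

theorem isBasisElt_p261453 : IsBasisElt 2 p261453 :=
  isBasisElt_of_zigzag zigzag_p261453 (by decide)

theorem zigzag_p523164 : Zigzag p523164 fun _ => True := by
  decide

theorem isBasisElt_p523164 : IsBasisElt 2 p523164 :=
  isBasisElt_of_zigzag zigzag_p523164 (by decide)

theorem zigzag_p562413 : Zigzag p562413 fun _ => True := by
  decide

theorem isBasisElt_p562413 : IsBasisElt 2 p562413 :=
  isBasisElt_of_zigzag zigzag_p562413 (by decide)

theorem zigzag_p562431 : Zigzag p562431 fun _ => True := by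
  decide

theorem isBasisElt_p562431 : IsBasisElt 2 p562431 :=
  isBasisElt_of_zigzag zigzag_p562431 (by decide)

theorem zigzag_p6723154 : Zigzag p6723154 fun _ => True := by
  decide

theorem isBasisElt_p6723154 : IsBasisElt 2 p6723154 :=
  isBasisElt_of_zigzag zigzag_p6723154 (by decide)

/-- rev-tier at most 2 iff avoiding the eleven listed permutations, which
form the basis `B₂` of the class of 3-reverse pass sortable permutations. -/
theorem revTier_le_two_iff :
    (∀ {n : ℕ} (σ : Equiv.Perm (Fin n)),
      revTier σ ≤ 2 ↔
        (Pattern.Avoids σ p24153 ∧ Pattern.Avoids σ p24513 ∧ Pattern.Avoids σ p24531 ∧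
         Pattern.Avoids σ p42513 ∧ Pattern.Avoids σ p42531 ∧ Pattern.Avoids σ p231564 ∧
         Pattern.Avoids σ p261453 ∧ Pattern.Avoids σ p523164 ∧ Pattern.Avoids σ p562413 ∧
         Pattern.Avoids σ p562431 ∧ Pattern.Avoids σ p6723154)) ∧
    (IsBasisElt 2 p24153 ∧ IsBasisElt 2 p24513 ∧ IsBasisElt 2 p24531 ∧
     IsBasisElt 2 p42513 ∧ IsBasisElt 2 p42531 ∧ IsBasisElt 2 p231564 ∧
     IsBasisElt 2 p261453 ∧ IsBasisElt 2 p523164 ∧ IsBasisElt 2 p562413 ∧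
     IsBasisElt 2 p562431 ∧ IsBasisElt 2 p6723154) := by
  refine ⟨fun {n} σ => ⟨fun h => ?_, fun h => ?_⟩, ?_⟩
  · have hz : ¬ Zigzag σ fun _ => True := by
      rw [← three_le_revTier_iff_zigzag]
      omega
    exact ⟨fun hc => hz (hc.zigzag zigzag_p24153),
      fun hc => hz (hc.zigzag zigzag_p24513),
      fun hc => hz (hc.zigzag zigzag_p24531),
      fun hc => hz (hc.zigzag zigzag_p42513),
      fun hc => hz (hc.zigzag zigzag_p42531),
      fun hc => hz (hc.zigzag zigzag_p231564),
      fun hc => hz (hc.zigzag zigzag_p261453),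
      fun hc => hz (hc.zigzag zigzag_p523164),
      fun hc => hz (hc.zigzag zigzag_p562413),
      fun hc => hz (hc.zigzag zigzag_p562431),
      fun hc => hz (hc.zigzag zigzag_p6723154)⟩
  · by_contra hlt
    have hc := ((three_le_revTier_iff_zigzag σ).1 (by omega)).contains
    simp only [Pattern.Avoids] at h
    simp only [ContainsBasis] at hc
    tauto
  · exact ⟨isBasisElt_p24153,
      isBasisElt_p24513,
      isBasisElt_p24531,
      isBasisElt_p42513,
      isBasisElt_p42531,
      isBasisElt_p231564,
      isBasisElt_p261453,
      isBasisElt_p523164,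
      isBasisElt_p562413,
      isBasisElt_p562431,
      isBasisElt_p6723154⟩
end

section
/- For every integer n ≥ 2, the maximum rev-tier over all permutations of length n equals n−2. Moreover, this maximum is attained by the permutation π = (n−2)(n−4)⋯6 4 2 n 1 3 5 ⋯ (n−1) when n is even, and by π = (n−1)(n−3)⋯6 4 2 n 1 3 5 ⋯ (n−2) when n is odd, whose maximum-length alternating down/up sequence of separated pairs is (1,2), (2,3), …, (n−2,n−1). -/
theorem SepPair.add_two_lt {n : ℕ} {σ : Equiv.Perm (Fin n)} {a : Fin n} (h : SepPair σ a) :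
    (a : ℕ) + 2 < n := by
  rcases h with ⟨_, _, p, _, _, hp⟩ | ⟨_, _, p, _, _, hp⟩ <;>
  · have := (σ p).isLt
    omega

theorem AltChain.sepPair {n : ℕ} {σ : Equiv.Perm (Fin n)} {b : Bool} {t : ℕ} {f : Fin t → Fin n}
    (h : AltChain σ b f) (j : Fin t) : SepPair σ (f j) := by
  have hj := h.2 j
  split_ifs at hj
  · exact Or.inr hj
  · exact Or.inl hj

theorem AltChain.length_le {n : ℕ} {σ : Equiv.Perm (Fin n)} {b : Bool} {t : ℕ} {f : Fin t → Fin n}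
    (h : AltChain σ b f) : t ≤ n - 2 := by
  have hlt (j : Fin t) : (f j : ℕ) < n - 2 := by
    have := (h.sepPair j).add_two_lt
    omega
  let g : Fin t → Fin (n - 2) := fun j => ⟨f j, hlt j⟩
  have hg : Function.Injective g := fun x y hxy =>
    h.1.injective (Fin.ext (Fin.mk.inj hxy))
  simpa using Fintype.card_le_of_injective g hg

theorem revTier_le {n : ℕ} (σ : Equiv.Perm (Fin n)) : revTier σ ≤ n - 2 :=
  csSup_le' fun _ ⟨_, hf⟩ => hf.length_le

theorem AltChain.le_revTier {n : ℕ} {σ : Equiv.Perm (Fin n)} {t : ℕ} {f : Fin t → Fin n}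
    (h : AltChain σ true f) : t ≤ revTier σ :=
  le_csSup ⟨n - 2, fun _ ⟨_, hf⟩ => hf.length_le⟩ ⟨f, h⟩

theorem maxPermVal_injective (n : ℕ) : Function.Injective (maxPermVal n) := by
  intro i j h
  have hi := i.isLt
  have hj := j.isLt
  have h' := congrArg Fin.val h
  unfold maxPermVal at h'
  apply Fin.ext
  split_ifs at h' <;> simp only at h' <;> omega

/-- The permutation with one-line notation `maxPermVal n`. -/
noncomputable def maxPerm (n : ℕ) : Equiv.Perm (Fin n) :=
  Equiv.ofBijective (maxPermVal n) (Finite.injective_iff_bijective.mp (maxPermVal_injective n))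

theorem maxPerm_apply (n : ℕ) (i : Fin n) : maxPerm n i = maxPermVal n i := rfl

theorem maxPerm_apply_mid {n : ℕ} (h : (n - 1) / 2 < n) :
    (maxPerm n ⟨(n - 1) / 2, h⟩ : ℕ) = n - 1 := by
  simp [maxPerm_apply, maxPermVal]

theorem maxPerm_symm_even {n : ℕ} (a : Fin n) (ha : (a : ℕ) + 1 < n) (he : (a : ℕ) % 2 = 0) :
    ((maxPerm n).symm a : ℕ) = (n - 1) / 2 + 1 + a / 2 := by
  have hlt : (n - 1) / 2 + 1 + (a : ℕ) / 2 < n := by omega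
  suffices h : (maxPerm n).symm a = ⟨_, hlt⟩ from congrArg Fin.val h
  rw [Equiv.symm_apply_eq, maxPerm_apply]
  apply Fin.ext
  simp only [maxPermVal]
  rw [dif_neg (by omega), dif_neg (by omega)]
  simp only
  omega

theorem maxPerm_symm_odd {n : ℕ} (a : Fin n) (ha : (a : ℕ) + 1 < n) (ho : (a : ℕ) % 2 = 1) :
    ((maxPerm n).symm a : ℕ) = (n - 1) / 2 - (a + 1) / 2 := by
  have hlt : (n - 1) / 2 - ((a : ℕ) + 1) / 2 < n := by omega
  suffices h : (maxPerm n).symm a = ⟨_, hlt⟩ from congrArg Fin.val h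
  rw [Equiv.symm_apply_eq, maxPerm_apply]
  apply Fin.ext
  simp only [maxPermVal]
  rw [dif_pos (by omega)]
  simp only
  omega

theorem maxPerm_downSepPair {n : ℕ} (a : Fin n) (ha : (a : ℕ) + 2 < n) (he : (a : ℕ) % 2 = 0) :
    DownSepPair (maxPerm n) a := by
  have hb : (a : ℕ) + 1 < n := by omega
  have h0 := maxPerm_symm_even a hb he
  have h1 := maxPerm_symm_odd ⟨(a : ℕ) + 1, hb⟩ ha (by simp only; omega)
  have hm := maxPerm_apply_mid (n := n) (by omega)
  simp only at h1
  refine ⟨hb, Fin.lt_def.mpr ?_, ⟨(n - 1) / 2, by omega⟩, Fin.lt_def.mpr ?_, Fin.lt_def.mpr ?_,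
    ?_⟩ <;>
    (try dsimp only) <;> omega

theorem maxPerm_upSepPair {n : ℕ} (a : Fin n) (ha : (a : ℕ) + 2 < n) (ho : (a : ℕ) % 2 = 1) :
    UpSepPair (maxPerm n) a := by
  have hb : (a : ℕ) + 1 < n := by omega
  have h0 := maxPerm_symm_odd a hb ho
  have h1 := maxPerm_symm_even ⟨(a : ℕ) + 1, hb⟩ ha (by simp only; omega)
  have hm := maxPerm_apply_mid (n := n) (by omega)
  simp only at h1
  refine ⟨hb, Fin.lt_def.mpr ?_, ⟨(n - 1) / 2, by omega⟩, Fin.lt_def.mpr ?_, Fin.lt_def.mpr ?_,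
    ?_⟩ <;>
    (try dsimp only) <;> omega

theorem maxPerm_altChain (n : ℕ) :
    AltChain (maxPerm n) true (Fin.castLE (Nat.sub_le n 2)) := by
  refine ⟨Fin.strictMono_castLE _, fun j => ?_⟩
  have hj : ((Fin.castLE (Nat.sub_le n 2) j : Fin n) : ℕ) + 2 < n := by
    have := j.isLt
    simp only [Fin.val_castLE]
    omega
  split_ifs with h
  · exact maxPerm_downSepPair _ hj (h.mpr rfl)
  · exact maxPerm_upSepPair _ hj (Nat.mod_two_ne_zero.mp fun h0 => h (iff_of_true h0 rfl))

/-- for `n ≥ 2` the maximal rev-tier of a permutation of length `n` is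
`n - 2`, attained by the explicit permutation `maxPermVal n` (evens of `{1,…,n}`
decreasing, then `n`, then odds increasing), whose maximum alternating down/up sequence
of separated pairs is `(1,2), (2,3), …, (n-2,n-1)`. -/
theorem max_revTier (n : ℕ) (hn : 2 ≤ n) :
    (∀ σ : Equiv.Perm (Fin n), revTier σ ≤ n - 2) ∧
    (∃ σ : Equiv.Perm (Fin n), (∀ i : Fin n, σ i = maxPermVal n i) ∧
      revTier σ = n - 2 ∧
      ∃ f : Fin (n - 2) → Fin n, AltChain σ true f ∧ ∀ j : Fin (n - 2), (f j : ℕ) = (j : ℕ)) := by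
  exact ⟨revTier_le, maxPerm n, maxPerm_apply n,
    le_antisymm (revTier_le _) (maxPerm_altChain n).le_revTier, _, maxPerm_altChain n,
    fun _ => rfl⟩
end

section
/- For every t ≥ 0, every permutation σ with t_rev(σ) ≥ t+1 has length at least t+3, and this bound is sharp: for every t ≥ 0 there exists a permutation of length exactly t+3 with rev-tier t+1. In particular, every basis element of the class of permutations with rev-tier at most t has length at least t+3. -/
theorem DownSepPair.add_three_le {n : ℕ} {σ : Equiv.Perm (Fin n)} {a : Fin n}
    (h : DownSepPair σ a) : (a : ℕ) + 3 ≤ n := by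
  obtain ⟨_, _, p, _, _, h⟩ := h
  have := (σ p).isLt
  omega

theorem UpSepPair.add_three_le {n : ℕ} {σ : Equiv.Perm (Fin n)} {a : Fin n}
    (h : UpSepPair σ a) : (a : ℕ) + 3 ≤ n := by
  obtain ⟨_, _, p, _, _, h⟩ := h
  have := (σ p).isLt
  omega

theorem AltChain.length_add_two_le {n s : ℕ} {σ : Equiv.Perm (Fin n)} {b : Bool}
    {f : Fin (s + 1) → Fin n} (h : AltChain σ b f) : s + 3 ≤ n := by
  obtain ⟨hmono, hsep⟩ := h
  have hlow : ∀ (k : ℕ) (hk : k < s + 1), k ≤ (f ⟨k, hk⟩ : ℕ) := by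
    intro k
    induction k with
    | zero => intro _; exact Nat.zero_le _
    | succ k ih =>
      intro hk
      have h1 := ih (by omega)
      have h2 : f ⟨k, by omega⟩ < f ⟨k + 1, hk⟩ := hmono (Fin.mk_lt_mk.2 (Nat.lt_succ_self k))
      have h3 := Fin.lt_def.1 h2
      omega
  have hlast := hlow s (Nat.lt_succ_self s)
  have hs := hsep ⟨s, Nat.lt_succ_self s⟩
  have : (f ⟨s, Nat.lt_succ_self s⟩ : ℕ) + 3 ≤ n := by
    split_ifs at hs
    · exact hs.add_three_le
    · exact hs.add_three_le
  omega

/-- The supremum defining `revTier` is attained. -/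
theorem exists_altChain_revTier {n : ℕ} (σ : Equiv.Perm (Fin n)) :
    ∃ f : Fin (revTier σ) → Fin n, AltChain σ true f :=
  Nat.sSup_mem (s := {t : ℕ | ∃ f : Fin t → Fin n, AltChain σ true f})
    ⟨0, Fin.elim0, fun i => i.elim0, fun i => i.elim0⟩ (bddAbove_altChain σ)

theorem add_three_le_of_le_revTier {t n : ℕ} {σ : Equiv.Perm (Fin n)}
    (h : t + 1 ≤ revTier σ) : t + 3 ≤ n := by
  obtain ⟨s, hs⟩ : ∃ s, revTier σ = s + 1 := ⟨revTier σ - 1, by omega⟩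
  have hchain := exists_altChain_revTier σ
  rw [hs] at hchain
  obtain ⟨f, hf⟩ := hchain
  have := hf.length_add_two_le
  omega

/-- The position of the value `v` in the extremal permutation of length `t + 3`: odd values in
decreasing order, then the maximum `t + 2` in position `(t + 2) / 2`, then even values in
increasing order. -/
def extremalPos (t : ℕ) (v : Fin (t + 3)) : Fin (t + 3) :=
  if hmax : (v : ℕ) = t + 2 then ⟨(t + 2) / 2, by omega⟩
  else if hodd : (v : ℕ) % 2 = 1 then ⟨(t + 2) / 2 - (v + 1) / 2, by omega⟩
  else ⟨(t + 2) / 2 + 1 + v / 2, by have := v.isLt; omega⟩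

theorem extremalPos_val (t : ℕ) (v : Fin (t + 3)) :
    (extremalPos t v : ℕ) = if (v : ℕ) = t + 2 then (t + 2) / 2
      else if (v : ℕ) % 2 = 1 then (t + 2) / 2 - (v + 1) / 2 else (t + 2) / 2 + 1 + v / 2 := by
  unfold extremalPos
  split_ifs <;> rfl

theorem extremalPos_injective (t : ℕ) : Function.Injective (extremalPos t) := by
  intro v w h
  have h := congrArg Fin.val h
  rw [extremalPos_val, extremalPos_val] at h
  have := v.isLt
  have := w.isLt
  apply Fin.ext
  split_ifs at h <;> omega

/-- The extremal permutation of length `t + 3`, defined through its inverse `extremalPos`. -/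
noncomputable def extremalPerm (t : ℕ) : Equiv.Perm (Fin (t + 3)) :=
  (Equiv.ofBijective (extremalPos t)
    (Finite.injective_iff_bijective.1 (extremalPos_injective t))).symm

theorem extremalPerm_symm_apply (t : ℕ) (v : Fin (t + 3)) :
    (extremalPerm t).symm v = extremalPos t v := rfl

theorem extremalPerm_extremalPos (t : ℕ) (v : Fin (t + 3)) :
    extremalPerm t (extremalPos t v) = v :=
  (extremalPerm t).apply_symm_apply v

theorem extremalPerm_downSepPair {t : ℕ} (a : Fin (t + 3)) (ha : (a : ℕ) < t + 1)
    (heven : (a : ℕ) % 2 = 0) : DownSepPair (extremalPerm t) a := by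
  have hb : (a : ℕ) + 1 < t + 3 := by omega
  -- The maximum `t + 2` is the separating value.
  have hl : extremalPos t ⟨a + 1, hb⟩ < extremalPos t (Fin.last (t + 2)) := by
    rw [Fin.lt_def, extremalPos_val, extremalPos_val, Fin.val_last]
    dsimp only
    split_ifs <;> omega
  have hr : extremalPos t (Fin.last (t + 2)) < extremalPos t a := by
    rw [Fin.lt_def, extremalPos_val, extremalPos_val, Fin.val_last]
    split_ifs <;> omega
  refine ⟨hb, hl.trans hr, extremalPos t (Fin.last (t + 2)), hl, hr, ?_⟩
  rw [extremalPerm_extremalPos, Fin.val_last]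
  omega

theorem extremalPerm_upSepPair {t : ℕ} (a : Fin (t + 3)) (ha : (a : ℕ) < t + 1)
    (hodd : (a : ℕ) % 2 = 1) : UpSepPair (extremalPerm t) a := by
  have hb : (a : ℕ) + 1 < t + 3 := by omega
  have hl : extremalPos t a < extremalPos t (Fin.last (t + 2)) := by
    rw [Fin.lt_def, extremalPos_val, extremalPos_val, Fin.val_last]
    split_ifs <;> omega
  have hr : extremalPos t (Fin.last (t + 2)) < extremalPos t ⟨a + 1, hb⟩ := by
    rw [Fin.lt_def, extremalPos_val, extremalPos_val, Fin.val_last]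
    dsimp only
    split_ifs <;> omega
  refine ⟨hb, hl.trans hr, extremalPos t (Fin.last (t + 2)), hl, hr, ?_⟩
  rw [extremalPerm_extremalPos, Fin.val_last]
  omega

theorem revTier_extremalPerm (t : ℕ) : revTier (extremalPerm t) = t + 1 := by
  apply le_antisymm
  · by_contra! h
    have := add_three_le_of_le_revTier (t := t + 1) h
    omega
  · refine le_csSup (bddAbove_altChain _) ⟨fun j => ⟨j, by omega⟩, fun i j h => h, fun j => ?_⟩
    have hj := j.isLt
    split_ifs with h
    · exact extremalPerm_downSepPair _ hj (h.2 rfl)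
    · exact extremalPerm_upSepPair _ hj (by simp at h; simpa using h)

/-- every permutation of rev-tier at least `t+1` has length at least `t+3`,
the bound being attained; in particular every basis element of `B_t` has length at least
`t+3`. -/
theorem revTier_length_lower_bound (t : ℕ) :
    (∀ {n : ℕ} (σ : Equiv.Perm (Fin n)), t + 1 ≤ revTier σ → t + 3 ≤ n) ∧
    (∃ σ : Equiv.Perm (Fin (t + 3)), revTier σ = t + 1) ∧
    (∀ {n : ℕ} (σ : Equiv.Perm (Fin n)), IsBasisElt t σ → t + 3 ≤ n) := by
  exact ⟨fun σ h => add_three_le_of_le_revTier h, ⟨extremalPerm t, revTier_extremalPerm t⟩,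
    fun σ h => add_three_le_of_le_revTier h.1⟩
end

section
/- Let η(n,k) be the number of permutations of length n avoiding both 132 and 231 (equivalently, having no separated pairs) in which the entry 1 occurs in position k. Then η(n,k) = C(n−1, k−1), the binomial coefficient (n−1 choose k−1). -/
/-- No entry of `σ` is larger than both some earlier and some later entry. -/
def NoPeak {n : ℕ} (σ : Equiv.Perm (Fin n)) : Prop :=
  ∀ i j l : Fin n, i < j → j < l → σ i < σ j → σ l < σ j → False

theorem noPeak_iff {n : ℕ} (σ : Equiv.Perm (Fin n)) :
    NoPeak σ ↔ Pattern.Avoids σ p132 ∧ Pattern.Avoids σ p231 := by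
  constructor
  · intro h
    constructor
    · rintro ⟨α, hα, H⟩
      exact h (α 0) (α 1) (α 2) (hα (by decide)) (hα (by decide))
        ((H 0 1).2 (by decide)) ((H 2 1).2 (by decide))
    · rintro ⟨α, hα, H⟩
      exact h (α 0) (α 1) (α 2) (hα (by decide)) (hα (by decide))
        ((H 0 1).2 (by decide)) ((H 2 1).2 (by decide))
  · rintro ⟨h1, h2⟩ i j l hij hjl hi hl
    have hmono : StrictMono ![i, j, l] := by
      rw [Fin.strictMono_iff_lt_succ]
      intro a
      fin_cases a
      · exact hij
      · exact hjl
    have hne : σ i ≠ σ l := fun e => (hij.trans hjl).ne (σ.injective e)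
    -- The end entries of the peak decide which of the two patterns occurs.
    rcases lt_or_gt_of_ne hne with hil | hil
    · refine h1 ⟨![i, j, l], hmono, ?_⟩
      intro a b
      fin_cases a <;> fin_cases b <;>
        simp [p132, hi, hl, hil, hi.le, hl.le, hil.le]
    · refine h2 ⟨![i, j, l], hmono, ?_⟩
      intro a b
      fin_cases a <;> fin_cases b <;>
        simp [p231, hi, hl, hil, hi.le, hl.le, hil.le]

/-- The signed value of `v`: negative when `v` is to stand to the left of the entry `0`
(that is, `v ∈ S`). Sorting by this key lists `S` decreasingly, then the complement of `S`
increasingly. -/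
def signedKey {n : ℕ} (S : Finset (Fin n)) (v : Fin n) : ℤ :=
  if v ∈ S then -((v : ℕ) : ℤ) else ((v : ℕ) : ℤ)

theorem signedKey_injective {n : ℕ} (S : Finset (Fin n)) :
    Function.Injective (signedKey S) := by
  intro u v h
  have hval : (u : ℕ) = v := by
    unfold signedKey at h
    split_ifs at h <;> omega
  exact Fin.ext hval

/-- The position of the value `v` after sorting all values by `signedKey S`. -/
def keyPos {m : ℕ} (S : Finset (Fin (m + 1))) (v : Fin (m + 1)) : Fin (m + 1) :=
  ⟨(Finset.univ.filter fun u => signedKey S u < signedKey S v).card, by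
    have h : (Finset.univ.filter fun u => signedKey S u < signedKey S v) ⊂ Finset.univ :=
      Finset.filter_ssubset.2 ⟨v, Finset.mem_univ _, lt_irrefl _⟩
    simpa using Finset.card_lt_card h⟩

theorem keyPos_lt {m : ℕ} {S : Finset (Fin (m + 1))} {u v : Fin (m + 1)}
    (h : signedKey S u < signedKey S v) : keyPos S u < keyPos S v := by
  simp only [Fin.lt_def, keyPos]
  refine Finset.card_lt_card (Finset.ssubset_iff_of_subset ?_ |>.2 ⟨u, ?_, ?_⟩)
  · intro w hw
    simp only [Finset.mem_filter, Finset.mem_univ, true_and] at hw ⊢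
    exact hw.trans h
  · simpa using h
  · simp

theorem keyPos_lt_iff {m : ℕ} {S : Finset (Fin (m + 1))} {u v : Fin (m + 1)} :
    keyPos S u < keyPos S v ↔ signedKey S u < signedKey S v := by
  refine ⟨fun h => ?_, keyPos_lt⟩
  rcases lt_trichotomy (signedKey S u) (signedKey S v) with h' | h' | h'
  · exact h'
  · rw [signedKey_injective S h'] at h
    exact absurd h (lt_irrefl _)
  · exact absurd (h.trans (keyPos_lt h')) (lt_irrefl _)

theorem keyPos_bijective {m : ℕ} (S : Finset (Fin (m + 1))) :
    Function.Bijective (keyPos S) := by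
  refine Finite.injective_iff_bijective.1 fun u v h => signedKey_injective S ?_
  rcases lt_trichotomy (signedKey S u) (signedKey S v) with h' | h' | h'
  · exact absurd h (keyPos_lt h').ne
  · exact h'
  · exact absurd h (keyPos_lt h').ne'

/-- The set of values to the left of the smallest value in `σ`. -/
def leftSet {m : ℕ} (σ : Equiv.Perm (Fin (m + 1))) : Finset (Fin (m + 1)) :=
  Finset.univ.filter fun v => σ.symm v < σ.symm 0

theorem zero_notMem_leftSet {m : ℕ} (σ : Equiv.Perm (Fin (m + 1))) : 0 ∉ leftSet σ := by
  simp [leftSet]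

theorem card_symm_lt {m : ℕ} (σ : Equiv.Perm (Fin (m + 1))) (v : Fin (m + 1)) :
    (Finset.univ.filter fun u => σ.symm u < σ.symm v).card = (σ.symm v : ℕ) := by
  have h : (Finset.univ.filter fun u => σ.symm u < σ.symm v)
      = (Finset.Iio (σ.symm v)).map σ.toEmbedding := by
    ext u
    simp [Finset.mem_map_equiv]
  rw [h, Finset.card_map, Fin.card_Iio]

/-- In a permutation without peaks the entries left of the minimum decrease and those right
of it increase, so positions are ordered by the signed key. -/
theorem NoPeak.symm_lt {m : ℕ} {σ : Equiv.Perm (Fin (m + 1))} (h : NoPeak σ)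
    {u v : Fin (m + 1)} (huv : signedKey (leftSet σ) u < signedKey (leftSet σ) v) :
    σ.symm u < σ.symm v := by
  by_contra hc
  have hne : u ≠ v := by
    rintro rfl
    exact lt_irrefl _ huv
  have hvu : σ.symm v < σ.symm u :=
    lt_of_le_of_ne (not_lt.1 hc) fun e => hne (σ.symm.injective e).symm
  by_cases hu : u ∈ leftSet σ <;> by_cases hv : v ∈ leftSet σ <;>
    simp only [signedKey, hu, hv, if_true, if_false] at huv
  · -- `v`, `u`, `0` in this order would make `u` a peak.
    have hu' : σ.symm u < σ.symm 0 := by simpa [leftSet] using hu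
    refine h _ _ _ hvu hu' ?_ ?_ <;>
      simp only [Equiv.apply_symm_apply, Fin.lt_def, Fin.val_zero] <;> omega
  · have hu' : σ.symm u < σ.symm 0 := by simpa [leftSet] using hu
    exact hv (by simpa [leftSet] using hvu.trans hu')
  · omega
  · -- `0`, `v`, `u` in this order would make `v` a peak.
    have hv' : σ.symm 0 ≤ σ.symm v := by simpa [leftSet] using hv
    have hv0 : (0 : Fin (m + 1)) ≠ v := by
      rintro rfl
      simp at huv
      omega
    have hlt : σ.symm 0 < σ.symm v :=
      lt_of_le_of_ne hv' fun e => hv0 (σ.symm.injective e)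
    refine h _ _ _ hlt hvu ?_ ?_ <;>
      simp only [Equiv.apply_symm_apply, Fin.lt_def, Fin.val_zero] <;> omega

/-- A permutation without peaks is recovered from the set of values left of its minimum. -/
theorem NoPeak.symm_eq {m : ℕ} {σ : Equiv.Perm (Fin (m + 1))} (h : NoPeak σ)
    (v : Fin (m + 1)) : σ.symm v = keyPos (leftSet σ) v := by
  apply Fin.ext
  rw [← card_symm_lt σ v]
  show _ = (Finset.univ.filter fun u => signedKey (leftSet σ) u < signedKey (leftSet σ) v).card
  congr 1
  ext u
  simp only [Finset.mem_filter, Finset.mem_univ, true_and]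
  refine ⟨fun huv => ?_, h.symm_lt⟩
  rcases lt_trichotomy (signedKey (leftSet σ) u) (signedKey (leftSet σ) v) with h' | h' | h'
  · exact h'
  · rw [signedKey_injective (leftSet σ) h'] at huv
    exact absurd huv (lt_irrefl _)
  · exact absurd (huv.trans (h.symm_lt h')) (lt_irrefl _)

/-- The permutation listing `S` decreasingly and then the complement of `S` increasingly.
If `0 ∈ S`, then `0` still stands between the two runs, since its key is `0` either way. -/
noncomputable def valley {m : ℕ} (S : Finset (Fin (m + 1))) :
    Equiv.Perm (Fin (m + 1)) :=
  (Equiv.ofBijective (keyPos S) (keyPos_bijective S)).symm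

theorem valley_symm {m : ℕ} (S : Finset (Fin (m + 1))) (v : Fin (m + 1)) :
    (valley S).symm v = keyPos S v := rfl

theorem leftSet_valley {m : ℕ} {S : Finset (Fin (m + 1))} (hS : 0 ∉ S) :
    leftSet (valley S) = S := by
  ext v
  simp only [leftSet, Finset.mem_filter, Finset.mem_univ, true_and, valley_symm,
    keyPos_lt_iff]
  by_cases hv : v ∈ S
  · have hv0 : v ≠ 0 := fun e => hS (e ▸ hv)
    have hpos : (v : ℕ) ≠ 0 := fun e => hv0 (Fin.ext e)
    simp only [signedKey, hv, hS, if_true, if_false, iff_true, Fin.val_zero]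
    omega
  · simp only [signedKey, hv, hS, if_false, iff_false, Fin.val_zero]
    omega

theorem noPeak_valley {m : ℕ} (S : Finset (Fin (m + 1))) :
    NoPeak (valley S) := by
  intro i j l hij hjl hi hl
  have key : ∀ {a b : Fin (m + 1)}, a < b →
      signedKey S (valley S a) < signedKey S (valley S b) := by
    intro a b hab
    rw [← keyPos_lt_iff, ← valley_symm S, ← valley_symm S]
    simpa using hab
  have h1 := key hij
  have h2 := key hjl
  -- A key is a value up to sign, so the middle key of three cannot have the largest modulus.
  rw [Fin.lt_def] at hi hl
  unfold signedKey at h1 h2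
  split_ifs at h1 h2 <;> omega

/-- the number of permutations of length `n` avoiding 132 and 231 with
entry `1` in position `k` is the binomial coefficient `C(n-1, k-1)`. -/
theorem eta_eq_choose (n k : ℕ) (hn : 1 ≤ n) (hk : 1 ≤ k) (hkn : k ≤ n) :
    Nat.card {σ : Equiv.Perm (Fin n) //
        Pattern.Avoids σ p132 ∧ Pattern.Avoids σ p231 ∧ onePos σ k}
      = (n - 1).choose (k - 1) := by
  classical
  obtain ⟨m, rfl⟩ : ∃ m, n = m + 1 := ⟨n - 1, by omega⟩
  have hone : ∀ σ : Equiv.Perm (Fin (m + 1)), onePos σ k ↔ (leftSet σ).card = k - 1 := by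
    intro σ
    have hc : (leftSet σ).card = (σ.symm 0 : ℕ) := card_symm_lt σ 0
    rw [hc]
    constructor
    · intro h
      have h0 : (σ.symm 0 : ℕ) + 1 = k := h (Nat.succ_pos m)
      omega
    · intro h _
      show (σ.symm 0 : ℕ) + 1 = k
      omega
  have hmem : ∀ S : Finset (Fin (m + 1)),
      S ∈ (Finset.univ.erase (0 : Fin (m + 1))).powersetCard (k - 1) ↔
        0 ∉ S ∧ S.card = k - 1 := by
    intro S
    rw [Finset.mem_powersetCard, Finset.subset_erase]
    simp
  let Φ : {σ : Equiv.Perm (Fin (m + 1)) //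
        Pattern.Avoids σ p132 ∧ Pattern.Avoids σ p231 ∧ onePos σ k} →
      {S // S ∈ (Finset.univ.erase (0 : Fin (m + 1))).powersetCard (k - 1)} :=
    fun σ => ⟨leftSet σ.1, (hmem _).2 ⟨zero_notMem_leftSet _, (hone _).1 σ.2.2.2⟩⟩
  have hΦ : Function.Bijective Φ := by
    constructor
    · rintro ⟨σ, h1, h2, h3⟩ ⟨τ, g1, g2, g3⟩ h
      have hS : leftSet σ = leftSet τ := congrArg Subtype.val h
      have hsymm : σ.symm = τ.symm := by
        ext1 v
        rw [((noPeak_iff σ).2 ⟨h1, h2⟩).symm_eq, ((noPeak_iff τ).2 ⟨g1, g2⟩).symm_eq, hS]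
      have hστ : σ = τ := by
        rw [← σ.symm_symm, hsymm, τ.symm_symm]
      exact Subtype.ext hστ
    · rintro ⟨S, hS⟩
      obtain ⟨h0, hcard⟩ := (hmem S).1 hS
      obtain ⟨h1, h2⟩ := (noPeak_iff _).1 (noPeak_valley S)
      exact ⟨⟨valley S, h1, h2, (hone _).2 (by rw [leftSet_valley h0, hcard])⟩,
        Subtype.ext (leftSet_valley h0)⟩
  rw [Nat.card_eq_of_bijective Φ hΦ, Nat.card_eq_fintype_card, Fintype.card_coe,
    Finset.card_powersetCard]
  simp
end
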